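/- arXiv:quant-ph/0505038 — 6 statements merged into one kernel-verified Lean document; each statement's English description precedes it below -/
import Mathlib

section
/- Subadditivity of the von Neumann entropy: for every density matrix ρ whose rows and columns are indexed by the pairs Fin dA × Fin dB, one has S(ρ) ≤ S(tr_B ρ) + S(tr_A ρ). -/
open scoped ComplexConjugate ComplexOrder

/-- A density matrix: positive semidefinite with trace one. -/
def IsDensityMatrix {n : Type*} [Fintype n] (ρ : Matrix n n ℂ) : Prop :=
  ρ.PosSemidef ∧ ρ.trace = 1

/-- The von Neumann entropy (in bits) of a (Hermitian) matrix:
`S(ρ) = −∑ᵢ λᵢ log₂ λᵢ` over the eigenvalues, with `0·log₂ 0 = 0`. -/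
noncomputable def vnEntropy {n : Type*} [Fintype n] [DecidableEq n]
    (ρ : Matrix n n ℂ) : ℝ :=
  if h : ρ.IsHermitian then -∑ i, h.eigenvalues i * Real.logb 2 (h.eigenvalues i) else 0

/-- The trace norm of a Hermitian matrix: the sum of the absolute values of
its eigenvalues. -/
noncomputable def traceNorm {n : Type*} [Fintype n] [DecidableEq n]
    (M : Matrix n n ℂ) : ℝ :=
  if h : M.IsHermitian then ∑ i, |h.eigenvalues i| else 0

/-- Partial trace over the second (B) system. -/
noncomputable def ptraceB {dA dB : ℕ} (ρ : Matrix (Fin dA × Fin dB) (Fin dA × Fin dB) ℂ) :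
    Matrix (Fin dA) (Fin dA) ℂ :=
  Matrix.of fun i i' => ∑ k, ρ (i, k) (i', k)

/-- Partial trace over the first (A) system. -/
noncomputable def ptraceA {dA dB : ℕ} (ρ : Matrix (Fin dA × Fin dB) (Fin dA × Fin dB) ℂ) :
    Matrix (Fin dB) (Fin dB) ℂ :=
  Matrix.of fun k k' => ∑ i, ρ (i, k) (i, k')

open Real Matrix
open scoped Kronecker

/-!
Let `V` and `W` diagonalize the two partial traces of `ρ`. Conjugating `ρ` by `V ⊗ W` changes none
of the three spectra, so we may assume that both partial traces are diagonal. The diagonal `p` of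
`ρ` is then a joint distribution whose marginals are the spectra of the partial traces. It is the
image of the spectrum of `ρ` under a doubly stochastic matrix, so `S(ρ) ≤ H(p)` by concavity of
`-x log x`. Gibbs' inequality, comparing `p` with the product of its marginals, bounds `H(p)` by
the sum of the marginal entropies; for total mass `s ≤ 1` the product has mass `s ^ 2 ≤ s`.
-/

/-! ### Shannon entropy -/

/-- The Shannon entropy, in bits, of a finite family of weights, which need not sum to one. -/
noncomputable def shannonEntropy {ι : Type*} [Fintype ι] (p : ι → ℝ) : ℝ :=
  -∑ i, p i * logb 2 (p i)

theorem shannonEntropy_eq_sum_negMulLog_div_log {ι : Type*} [Fintype ι] (p : ι → ℝ) :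
    shannonEntropy p = (∑ i, negMulLog (p i)) / log 2 := by
  simp only [shannonEntropy, negMulLog_eq_neg, logb, Finset.sum_neg_distrib, neg_div,
    Finset.sum_div, mul_div_assoc]

theorem negMulLog_le_sub_sub_mul_log {p q : ℝ} (hp : 0 ≤ p) (hq : 0 ≤ q) (hpq : q = 0 → p = 0) :
    negMulLog p ≤ q - p - p * log q := by
  rcases hq.eq_or_lt with rfl | hq
  · simp [hpq rfl]
  have hp_eq : q * (p / q) = p := mul_div_cancel₀ p hq.ne'
  calc negMulLog p = p / q * negMulLog q + q * negMulLog (p / q) := by rw [← negMulLog_mul, hp_eq]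
    _ ≤ p / q * negMulLog q + q * (1 - p / q) := by
      gcongr
      exact negMulLog_le_one_sub_self (by positivity)
    _ = q - p - p * log q := by rw [negMulLog]; field_simp; ring

section Marginals

variable {ι κ : Type*} [Fintype ι] [Fintype κ] {p : ι × κ → ℝ}

theorem negMulLog_le_of_marginals (hp : ∀ x, 0 ≤ p x) (i : ι) (j : κ) :
    negMulLog (p (i, j)) ≤ (∑ j', p (i, j')) * (∑ i', p (i', j)) - p (i, j) -
      p (i, j) * log (∑ j', p (i, j')) - p (i, j) * log (∑ i', p (i', j)) := by
  have hrow : p (i, j) ≤ ∑ j', p (i, j') :=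
    Finset.single_le_sum (f := fun j' ↦ p (i, j')) (fun _ _ ↦ hp _) (Finset.mem_univ j)
  have hcol : p (i, j) ≤ ∑ i', p (i', j) :=
    Finset.single_le_sum (f := fun i' ↦ p (i', j)) (fun _ _ ↦ hp _) (Finset.mem_univ i)
  rcases (hp (i, j)).eq_or_lt with hzero | hpos
  · rw [← hzero] at hrow hcol ⊢
    simpa using mul_nonneg hrow hcol
  have hrow_pos := hpos.trans_le hrow
  have hcol_pos := hpos.trans_le hcol
  have hprod_pos := mul_pos hrow_pos hcol_pos
  refine (negMulLog_le_sub_sub_mul_log hpos.le hprod_pos.le fun h ↦ absurd h hprod_pos.ne').trans_eq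
    ?_
  rw [log_mul hrow_pos.ne' hcol_pos.ne']
  ring

theorem shannonEntropy_le_add_marginals (hp : ∀ x, 0 ≤ p x) (hp_sum : ∑ x, p x ≤ 1) :
    shannonEntropy p ≤
      shannonEntropy (fun i ↦ ∑ j, p (i, j)) + shannonEntropy (fun j ↦ ∑ i, p (i, j)) := by
  set a : ι → ℝ := fun i ↦ ∑ j, p (i, j)
  set b : κ → ℝ := fun j ↦ ∑ i, p (i, j)
  set s := ∑ x, p x with hs
  have hs_nonneg : 0 ≤ s := Fintype.sum_nonneg hp
  have ha_sum : ∑ i, a i = s := (Fintype.sum_prod_type p).symm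
  have hb_sum : ∑ j, b j = s := (Fintype.sum_prod_type_right p).symm
  simp only [shannonEntropy_eq_sum_negMulLog_div_log, ← add_div]
  gcongr
  calc ∑ x, negMulLog (p x) = ∑ i, ∑ j, negMulLog (p (i, j)) := Fintype.sum_prod_type _
    _ ≤ ∑ i, ∑ j, (a i * b j - p (i, j) - p (i, j) * log (a i) - p (i, j) * log (b j)) := by
      gcongr with i _ j _
      exact negMulLog_le_of_marginals hp i j
    _ = s * s - s - ∑ i, a i * log (a i) - ∑ j, b j * log (b j) := by
      simp only [Finset.sum_sub_distrib, ← Finset.mul_sum, ← Finset.sum_mul, ha_sum, hb_sum]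
      congr 1
      · rw [hs, Fintype.sum_prod_type]
      · rw [Finset.sum_comm]
        simp only [← Finset.sum_mul, b]
    _ ≤ -∑ i, a i * log (a i) + -∑ j, b j * log (b j) := by
      linarith [mul_le_of_le_one_left hs_nonneg hp_sum]
    _ = ∑ i, negMulLog (a i) + ∑ j, negMulLog (b j) := by
      simp only [negMulLog_eq_neg, Finset.sum_neg_distrib]

end Marginals

/-! ### Diagonals and unitary conjugation -/

theorem concaveOn_sum_le_sum_of_mem_doublyStochastic {𝕜 E β n : Type*} [Fintype n] [DecidableEq n]
    [Field 𝕜] [LinearOrder 𝕜] [IsStrictOrderedRing 𝕜] [AddCommGroup E] [Module 𝕜 E]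
    [AddCommGroup β] [PartialOrder β] [IsOrderedAddMonoid β] [Module 𝕜 β]
    [IsStrictOrderedModule 𝕜 β] {s : Set E} {f : E → β} (hf : ConcaveOn 𝕜 s f)
    {D : Matrix n n 𝕜} (hD : D ∈ doublyStochastic 𝕜 n) {x : n → E} (hx : ∀ i, x i ∈ s) :
    ∑ i, f (x i) ≤ ∑ j, f (∑ i, D j i • x i) :=
  calc ∑ i, f (x i) = ∑ i, ∑ j, D j i • f (x i) := by
        simp only [← Finset.sum_smul, sum_col_of_mem_doublyStochastic hD, one_smul]
    _ = ∑ j, ∑ i, D j i • f (x i) := Finset.sum_comm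
    _ ≤ ∑ j, f (∑ i, D j i • x i) := Finset.sum_le_sum fun j _ ↦
        hf.le_map_sum (fun _ _ ↦ nonneg_of_mem_doublyStochastic hD)
          (sum_row_of_mem_doublyStochastic hD j) fun i _ ↦ hx i

theorem trace_star_mul_mul_of_mem_unitaryGroup {R n : Type*} [CommRing R] [StarRing R] [Fintype n]
    [DecidableEq n] {U : Matrix n n R} (hU : U ∈ unitaryGroup n R) (A : Matrix n n R) :
    (star U * A * U).trace = A.trace := by
  rw [trace_mul_comm, ← mul_assoc, mem_unitaryGroup_iff.mp hU, one_mul]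

section RCLike

variable {𝕜 n : Type*} [RCLike 𝕜] [Fintype n] [DecidableEq n] {A : Matrix n n 𝕜}

theorem map_norm_sq_mem_doublyStochastic_of_mem_unitaryGroup (hA : A ∈ unitaryGroup n 𝕜) :
    A.map (‖·‖ ^ 2) ∈ doublyStochastic ℝ n := by
  refine mem_doublyStochastic_iff_sum.mpr ⟨fun i j ↦ by simp, fun i ↦ ?_, fun j ↦ ?_⟩
  · have hrow : (A * star A) i i = 1 := by rw [mem_unitaryGroup_iff.mp hA, one_apply_eq]
    simp only [mul_apply, star_apply, RCLike.star_def, RCLike.mul_conj] at hrow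
    exact_mod_cast hrow
  · have hcol : (star A * A) j j = 1 := by rw [mem_unitaryGroup_iff'.mp hA, one_apply_eq]
    simp only [mul_apply, star_apply, RCLike.star_def, RCLike.conj_mul] at hcol
    exact_mod_cast hcol

theorem re_diag_eq_sum_norm_sq_mul_eigenvalues (hA : A.IsHermitian) (j : n) :
    RCLike.re (A j j) =
      ∑ i, ‖(hA.eigenvectorUnitary : Matrix n n 𝕜) j i‖ ^ 2 * hA.eigenvalues i := by
  set U := (hA.eigenvectorUnitary : Matrix n n 𝕜) with hU
  have hdiag : A j j = ∑ i, ((‖U j i‖ ^ 2 * hA.eigenvalues i : ℝ) : 𝕜) := by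
    conv_lhs => rw [hA.spectral_theorem, Unitary.conjStarAlgAut_apply, ← hU]
    rw [mul_apply]
    refine Finset.sum_congr rfl fun i _ ↦ ?_
    rw [mul_diagonal, star_apply, RCLike.star_def, mul_right_comm, RCLike.mul_conj]
    push_cast
    rfl
  rw [hdiag, ← RCLike.ofReal_sum, RCLike.ofReal_re]

theorem sum_eigenvalues_le_sum_diag_of_concaveOn {β : Type*} [AddCommGroup β] [PartialOrder β]
    [IsOrderedAddMonoid β] [Module ℝ β] [IsStrictOrderedModule ℝ β] (hA : A.IsHermitian)
    {s : Set ℝ} {f : ℝ → β} (hf : ConcaveOn ℝ s f) (hs : ∀ i, hA.eigenvalues i ∈ s) :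
    ∑ i, f (hA.eigenvalues i) ≤ ∑ i, f (RCLike.re (A i i)) := by
  simp only [re_diag_eq_sum_norm_sq_mul_eigenvalues hA]
  exact concaveOn_sum_le_sum_of_mem_doublyStochastic hf
    (map_norm_sq_mem_doublyStochastic_of_mem_unitaryGroup hA.eigenvectorUnitary.2) hs

theorem star_eigenvectorUnitary_mul_mul (hA : A.IsHermitian) :
    star (hA.eigenvectorUnitary : Matrix n n 𝕜) * A * (hA.eigenvectorUnitary : Matrix n n 𝕜) =
      diagonal (RCLike.ofReal ∘ hA.eigenvalues) := by
  rw [← hA.conjStarAlgAut_star_eigenvectorUnitary, Unitary.conjStarAlgAut_star_apply]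

theorem eigenvalues_star_mul_mul_of_mem_unitaryGroup {U : Matrix n n 𝕜}
    (hU : U ∈ unitaryGroup n 𝕜) (hA : A.IsHermitian) (hUA : (star U * A * U).IsHermitian) :
    hUA.eigenvalues = hA.eigenvalues := by
  rw [IsHermitian.eigenvalues_eq_eigenvalues_iff, charpoly_mul_comm, ← mul_assoc,
    mem_unitaryGroup_iff.mp hU, one_mul]

end RCLike

/-! ### Von Neumann entropy -/

section VonNeumannEntropy

variable {n : Type*} [Fintype n] [DecidableEq n] {ρ : Matrix n n ℂ}

theorem vnEntropy_eq_shannonEntropy_eigenvalues (hρ : ρ.IsHermitian) :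
    vnEntropy ρ = shannonEntropy hρ.eigenvalues :=
  dif_pos hρ

theorem vnEntropy_star_mul_mul_of_mem_unitaryGroup {U : Matrix n n ℂ}
    (hU : U ∈ unitaryGroup n ℂ) (hρ : ρ.IsHermitian) :
    vnEntropy (star U * ρ * U) = vnEntropy ρ := by
  have hUρ : (star U * ρ * U).IsHermitian := isHermitian_conjTranspose_mul_mul U hρ
  rw [vnEntropy_eq_shannonEntropy_eigenvalues hρ, vnEntropy_eq_shannonEntropy_eigenvalues hUρ,
    eigenvalues_star_mul_mul_of_mem_unitaryGroup hU hρ]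

theorem vnEntropy_le_shannonEntropy_diag (hρ : ρ.PosSemidef) :
    vnEntropy ρ ≤ shannonEntropy fun i ↦ (ρ i i).re := by
  rw [vnEntropy_eq_shannonEntropy_eigenvalues hρ.isHermitian]
  simp only [shannonEntropy_eq_sum_negMulLog_div_log]
  refine div_le_div_of_nonneg_right ?_ (log_nonneg one_le_two)
  exact sum_eigenvalues_le_sum_diag_of_concaveOn hρ.isHermitian concaveOn_negMulLog
    hρ.eigenvalues_nonneg

end VonNeumannEntropy

/-! ### Partial traces -/

section PartialTrace

variable {R l l' m m' n n' p : Type*}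

/-- The partial trace over the second factor `n`. The index types `m` and `m'` of the remaining
factor may differ, so that rectangular matrices on that factor can be moved out of the trace. -/
def partialTraceRight [AddCommMonoid R] [Fintype n] (M : Matrix (m × n) (m' × n) R) :
    Matrix m m' R :=
  of fun i₁ i₂ ↦ ∑ k, M (i₁, k) (i₂, k)

/-- The partial trace over the first factor `m`, the index types `n` and `n'` of the remaining
factor again being allowed to differ. -/
def partialTraceLeft [AddCommMonoid R] [Fintype m] (M : Matrix (m × n) (m × n') R) :
    Matrix n n' R :=
  of fun k₁ k₂ ↦ ∑ i, M (i, k₁) (i, k₂)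

theorem partialTraceLeft_eq_partialTraceRight_swap [AddCommMonoid R] [Fintype m]
    (M : Matrix (m × n) (m × n') R) :
    partialTraceLeft M = partialTraceRight (M.submatrix Prod.swap Prod.swap) :=
  rfl

theorem conjTranspose_partialTraceRight [AddCommMonoid R] [StarAddMonoid R] [Fintype n]
    (M : Matrix (m × n) (m' × n) R) : (partialTraceRight M)ᴴ = partialTraceRight Mᴴ := by
  ext i i'
  simp [partialTraceRight]

theorem isHermitian_partialTraceRight [AddCommMonoid R] [StarAddMonoid R] [Fintype n]
    {M : Matrix (m × n) (m × n) R} (hM : M.IsHermitian) : (partialTraceRight M).IsHermitian := by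
  rw [IsHermitian, conjTranspose_partialTraceRight, hM.eq]

theorem isHermitian_partialTraceLeft [AddCommMonoid R] [StarAddMonoid R] [Fintype m]
    {M : Matrix (m × n) (m × n) R} (hM : M.IsHermitian) : (partialTraceLeft M).IsHermitian :=
  isHermitian_partialTraceRight (hM.submatrix Prod.swap)

section CommSemiring

variable [CommSemiring R] [Fintype n]

theorem partialTraceRight_kronecker_one_mul [Fintype m] [DecidableEq n] (A : Matrix l m R)
    (M : Matrix (m × n) (m' × n) R) :
    partialTraceRight ((A ⊗ₖ (1 : Matrix n n R)) * M) = A * partialTraceRight M := by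
  ext i i'
  simp only [partialTraceRight, of_apply, mul_apply, kronecker_apply, Fintype.sum_prod_type,
    one_apply, mul_ite, mul_one, mul_zero, ite_mul, zero_mul, Finset.sum_ite_eq, Finset.mem_univ,
    if_true, Finset.mul_sum]
  exact Finset.sum_comm

theorem partialTraceRight_mul_kronecker_one [Fintype m'] [DecidableEq n]
    (M : Matrix (m × n) (m' × n) R) (A : Matrix m' l R) :
    partialTraceRight (M * (A ⊗ₖ (1 : Matrix n n R))) = partialTraceRight M * A := by
  ext i i'
  simp only [partialTraceRight, of_apply, mul_apply, kronecker_apply, Fintype.sum_prod_type,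
    one_apply, mul_ite, mul_one, mul_zero, Finset.sum_ite_eq', Finset.mem_univ, if_true,
    Finset.sum_mul]
  exact Finset.sum_comm

theorem partialTraceRight_one_kronecker_mul_comm [Fintype m] [Fintype m'] [Fintype p]
    [DecidableEq m] [DecidableEq m'] (B : Matrix p n R) (M : Matrix (m × n) (m' × p) R) :
    partialTraceRight (((1 : Matrix m m R) ⊗ₖ B) * M) =
      partialTraceRight (M * ((1 : Matrix m' m' R) ⊗ₖ B)) := by
  ext i i'
  calc ∑ k, (((1 : Matrix m m R) ⊗ₖ B) * M) (i, k) (i', k)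
      = ∑ k, ∑ j, B k j * M (i, j) (i', k) := by
        simp [mul_apply, Fintype.sum_prod_type, one_apply]
    _ = ∑ j, ∑ k, M (i, j) (i', k) * B k j := by
        rw [Finset.sum_comm]
        simp only [mul_comm]
    _ = ∑ j, (M * ((1 : Matrix m' m' R) ⊗ₖ B)) (i, j) (i', j) := by
        simp [mul_apply, Fintype.sum_prod_type, one_apply]

theorem partialTraceRight_kronecker_mul_mul_kronecker [Fintype m] [Fintype m'] [Fintype p]
    [DecidableEq n] {B : Matrix p n R} {D : Matrix n p R} (hDB : D * B = 1) (A : Matrix l m R)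
    (M : Matrix (m × n) (m' × n) R) (C : Matrix m' l' R) :
    partialTraceRight ((A ⊗ₖ B) * M * (C ⊗ₖ D)) = A * partialTraceRight M * C := by
  classical
  have hAB : A ⊗ₖ B = (A ⊗ₖ (1 : Matrix p p R)) * ((1 : Matrix m m R) ⊗ₖ B) := by
    rw [← mul_kronecker_mul, Matrix.mul_one, Matrix.one_mul]
  have hCD : C ⊗ₖ D = ((1 : Matrix m' m' R) ⊗ₖ D) * (C ⊗ₖ (1 : Matrix p p R)) := by
    rw [← mul_kronecker_mul, Matrix.mul_one, Matrix.one_mul]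
  calc partialTraceRight ((A ⊗ₖ B) * M * (C ⊗ₖ D))
      = A * partialTraceRight (((1 : Matrix m m R) ⊗ₖ B) * (M * ((1 : Matrix m' m' R) ⊗ₖ D))) *
          C := by
        rw [← partialTraceRight_kronecker_one_mul, ← partialTraceRight_mul_kronecker_one, hAB, hCD]
        simp only [Matrix.mul_assoc]
    _ = A * partialTraceRight M * C := by
        rw [partialTraceRight_one_kronecker_mul_comm, Matrix.mul_assoc M, ← mul_kronecker_mul, hDB,
          Matrix.one_mul, one_kronecker_one, Matrix.mul_one]

end CommSemiring

theorem kronecker_submatrix_swap [CommMagma R] (A : Matrix l m R) (B : Matrix n p R) :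
    (A ⊗ₖ B).submatrix Prod.swap Prod.swap = B ⊗ₖ A := by
  ext i j
  exact mul_comm _ _

theorem partialTraceLeft_kronecker_mul_mul_kronecker [CommSemiring R] [Fintype m] [Fintype n]
    [Fintype n'] [Fintype p] [DecidableEq m] {A : Matrix p m R} {C : Matrix m p R}
    (hCA : C * A = 1) (B : Matrix l n R) (M : Matrix (m × n) (m × n') R) (D : Matrix n' l' R) :
    partialTraceLeft ((A ⊗ₖ B) * M * (C ⊗ₖ D)) = B * partialTraceLeft M * D := by
  rw [partialTraceLeft_eq_partialTraceRight_swap, partialTraceLeft_eq_partialTraceRight_swap,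
    submatrix_mul _ _ _ Prod.swap _ Prod.swap_bijective,
    submatrix_mul _ _ _ Prod.swap _ Prod.swap_bijective, kronecker_submatrix_swap,
    kronecker_submatrix_swap, partialTraceRight_kronecker_mul_mul_kronecker hCA]

section Unitary

variable [CommRing R] [StarRing R] [Fintype m] [Fintype n]

theorem partialTraceRight_star_kronecker_mul_mul [DecidableEq n] {W : Matrix n n R}
    (hW : W ∈ unitaryGroup n R) (V : Matrix m m R) (M : Matrix (m × n) (m × n) R) :
    partialTraceRight (star (V ⊗ₖ W) * M * (V ⊗ₖ W)) = star V * partialTraceRight M * V := by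
  rw [star_eq_conjTranspose, conjTranspose_kronecker]
  exact partialTraceRight_kronecker_mul_mul_kronecker (mem_unitaryGroup_iff.mp hW) _ _ _

theorem partialTraceLeft_star_kronecker_mul_mul [DecidableEq m] {V : Matrix m m R}
    (hV : V ∈ unitaryGroup m R) (W : Matrix n n R) (M : Matrix (m × n) (m × n) R) :
    partialTraceLeft (star (V ⊗ₖ W) * M * (V ⊗ₖ W)) = star W * partialTraceLeft M * W := by
  rw [star_eq_conjTranspose, conjTranspose_kronecker]
  exact partialTraceLeft_kronecker_mul_mul_kronecker (mem_unitaryGroup_iff.mp hV) _ _ _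

end Unitary

end PartialTrace

/-! ### Subadditivity -/

section Subadditivity

variable {m n : Type*} [Fintype m] [DecidableEq m] [Fintype n] [DecidableEq n]
  {ρ : Matrix (m × n) (m × n) ℂ}

theorem vnEntropy_le_shannonEntropy_diag_partialTraces (hρ : ρ.PosSemidef) (htr : ρ.trace ≤ 1) :
    vnEntropy ρ ≤ shannonEntropy (fun i ↦ (partialTraceRight ρ i i).re) +
      shannonEntropy (fun k ↦ (partialTraceLeft ρ k k).re) := by
  have hdiag_nonneg : ∀ x, 0 ≤ (ρ x x).re := fun x ↦ (Complex.le_def.mp hρ.diag_nonneg).1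
  have hdiag_sum : ∑ x, (ρ x x).re ≤ 1 := by
    simpa [trace] using (Complex.le_def.mp htr).1
  simpa only [partialTraceRight, partialTraceLeft, of_apply, Complex.re_sum] using
    (vnEntropy_le_shannonEntropy_diag hρ).trans
      (shannonEntropy_le_add_marginals hdiag_nonneg hdiag_sum)

theorem vnEntropy_subadditive_general (hρ : ρ.PosSemidef) (htr : ρ.trace ≤ 1) :
    vnEntropy ρ ≤ vnEntropy (partialTraceRight ρ) + vnEntropy (partialTraceLeft ρ) := by
  have hR := isHermitian_partialTraceRight hρ.isHermitian
  have hL := isHermitian_partialTraceLeft hρ.isHermitian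
  set V := (hR.eigenvectorUnitary : Matrix m m ℂ)
  set W := (hL.eigenvectorUnitary : Matrix n n ℂ)
  have hV : V ∈ unitaryGroup m ℂ := hR.eigenvectorUnitary.2
  have hW : W ∈ unitaryGroup n ℂ := hL.eigenvectorUnitary.2
  have hVW : V ⊗ₖ W ∈ unitaryGroup (m × n) ℂ := kronecker_mem_unitary hV hW
  set σ := star (V ⊗ₖ W) * ρ * (V ⊗ₖ W)
  have hσ : σ.PosSemidef := hρ.conjTranspose_mul_mul_same _
  have hσ_trace : σ.trace ≤ 1 := (trace_star_mul_mul_of_mem_unitaryGroup hVW ρ).trans_le htr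
  have hσR : partialTraceRight σ = diagonal (RCLike.ofReal ∘ hR.eigenvalues) :=
    (partialTraceRight_star_kronecker_mul_mul hW V ρ).trans (star_eigenvectorUnitary_mul_mul hR)
  have hσL : partialTraceLeft σ = diagonal (RCLike.ofReal ∘ hL.eigenvalues) :=
    (partialTraceLeft_star_kronecker_mul_mul hV W ρ).trans (star_eigenvectorUnitary_mul_mul hL)
  rw [← vnEntropy_star_mul_mul_of_mem_unitaryGroup hVW hρ.isHermitian,
    vnEntropy_eq_shannonEntropy_eigenvalues hR, vnEntropy_eq_shannonEntropy_eigenvalues hL]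
  simpa [hσR, hσL] using vnEntropy_le_shannonEntropy_diag_partialTraces hσ hσ_trace

end Subadditivity

/-- subadditivity of the von Neumann entropy. -/
theorem vnEntropy_subadditive {dA dB : ℕ}
    (ρ : Matrix (Fin dA × Fin dB) (Fin dA × Fin dB) ℂ)
    (hρ : IsDensityMatrix ρ) :
    vnEntropy ρ ≤ vnEntropy (ptraceB ρ) + vnEntropy (ptraceA ρ) :=
  vnEntropy_subadditive_general hρ.1 hρ.2.le
end

section
/- Fannes' inequality: there exists a universal constant K such that for every d ≥ 2, every ε ∈ [0,1], and all density matrices ρ and σ on ℂ^d with ‖ρ − σ‖₁ ≤ ε, one has |S(ρ) − S(σ)| ≤ η(ε) + K·ε·log₂ d, where η(x) = −x·log₂ x (with η(0) = 0). -/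
open scoped ComplexConjugate ComplexOrder

/-!
By Weyl's monotonicity theorem the ordered eigenvalues of a Hermitian matrix increase with the
matrix. Comparing `ρ` and `σ` with a common upper bound turns this into Mirsky's inequality
`∑ |λᵢ(ρ) - λᵢ(σ)| ≤ ‖ρ - σ‖₁`, which reduces the problem to numbers in `[0, 1]`.

Let `η x = -x ln x`. Subadditivity of `η` and monotonicity of `x ↦ η x + x` on `[0, 1]` give
`|η x - η y| ≤ η |x - y| + |x - y|`. Summing over the `d` eigenvalues and applying Jensen's
inequality bounds the entropy difference (in nats) by `d (η (δ / d) + δ / d)`, where `δ` is the sum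
of the eigenvalue gaps. This is increasing in `δ ≤ d`, and equals `η δ + δ ln d + δ`.
-/

open scoped InnerProductSpace MatrixOrder
open Real (log logb negMulLog)

section Eigenvalues

variable {𝕜 E : Type*} [RCLike 𝕜] [NormedAddCommGroup E] [InnerProductSpace 𝕜 E]
  [FiniteDimensional 𝕜 E] {d : ℕ} {T : E →ₗ[𝕜] E}

theorem re_inner_apply_eq_sum_eigenvalues_mul (hT : T.IsSymmetric)
    (hd : Module.finrank 𝕜 E = d) (x : E) :
    RCLike.re ⟪x, T x⟫_𝕜 =
      ∑ j, hT.eigenvalues hd j * ‖(hT.eigenvectorBasis hd).repr x j‖ ^ 2 := by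
  rw [← (hT.eigenvectorBasis hd).repr.inner_map_map, PiLp.inner_apply, map_sum]
  refine Finset.sum_congr rfl fun j _ ↦ ?_
  rw [hT.eigenvectorBasis_apply_self_apply hd, RCLike.inner_apply, mul_assoc, RCLike.mul_conj]
  norm_cast

theorem eigenvalues_mul_norm_sq_le_re_inner (hT : T.IsSymmetric) (hd : Module.finrank 𝕜 E = d)
    {i : Fin d} {x : E} (hx : ∀ j, i < j → (hT.eigenvectorBasis hd).repr x j = 0) :
    hT.eigenvalues hd i * ‖x‖ ^ 2 ≤ RCLike.re ⟪x, T x⟫_𝕜 := by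
  rw [re_inner_apply_eq_sum_eigenvalues_mul hT hd,
    ← (hT.eigenvectorBasis hd).sum_sq_norm_inner_right x, Finset.mul_sum]
  refine Finset.sum_le_sum fun j _ ↦ ?_
  rw [← OrthonormalBasis.repr_apply_apply]
  obtain hji | hij := le_or_gt j i
  · gcongr
    exact hT.eigenvalues_antitone hd hji
  · simp [hx j hij]

theorem re_inner_le_eigenvalues_mul_norm_sq (hT : T.IsSymmetric) (hd : Module.finrank 𝕜 E = d)
    {i : Fin d} {x : E} (hx : ∀ j, j < i → (hT.eigenvectorBasis hd).repr x j = 0) :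
    RCLike.re ⟪x, T x⟫_𝕜 ≤ hT.eigenvalues hd i * ‖x‖ ^ 2 := by
  rw [re_inner_apply_eq_sum_eigenvalues_mul hT hd,
    ← (hT.eigenvectorBasis hd).sum_sq_norm_inner_right x, Finset.mul_sum]
  refine Finset.sum_le_sum fun j _ ↦ ?_
  rw [← OrthonormalBasis.repr_apply_apply]
  obtain hij | hji := le_or_gt i j
  · gcongr
    exact hT.eigenvalues_antitone hd hij
  · simp [hx j hji]

/-- The conditions on `x` are at most `card ι - 1` linear equations. -/
theorem exists_ne_zero_repr_eq_zero {K V ι : Type*} [DivisionRing K] [AddCommGroup V] [Module K V]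
    [Finite ι] [Preorder ι] (a b : Module.Basis ι K V) (i : ι) :
    ∃ x ≠ 0, (∀ j < i, a.repr x j = 0) ∧ ∀ j > i, b.repr x j = 0 := by
  classical
  cases nonempty_fintype ι
  have := a.finiteDimensional_of_finite
  let f : V →ₗ[K] ({j // j ≠ i} → K) :=
    LinearMap.pi fun j ↦ if j.1 < i then a.coord j else b.coord j
  have finrank_lt : Module.finrank K ({j // j ≠ i} → K) < Module.finrank K V := by
    rw [Module.finrank_fintype_fun_eq_card, Module.finrank_eq_card_basis a]
    exact Fintype.card_subtype_lt (x := i) (by simp)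
  obtain ⟨x, hfx, hx⟩ :=
    Submodule.exists_mem_ne_zero_of_ne_bot (f.ker_ne_bot_of_finrank_lt finrank_lt)
  have f_apply (j : {j // j ≠ i}) : f x j = 0 := congrFun (LinearMap.mem_ker.1 hfx) j
  refine ⟨x, hx, fun j hj ↦ ?_, fun j hj ↦ ?_⟩
  · simpa [f, hj] using f_apply ⟨j, hj.ne⟩
  · simpa [f, hj.not_gt] using f_apply ⟨j, hj.ne'⟩

theorem eigenvalues_le_of_isSymmetric_of_le {S T : E →ₗ[𝕜] E} (hS : S.IsSymmetric)
    (hT : T.IsSymmetric) (hd : Module.finrank 𝕜 E = d) (hST : S ≤ T) (i : Fin d) :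
    hS.eigenvalues hd i ≤ hT.eigenvalues hd i := by
  obtain ⟨x, hx, hxT, hxS⟩ := exists_ne_zero_repr_eq_zero
    (hT.eigenvectorBasis hd).toBasis (hS.eigenvectorBasis hd).toBasis i
  have re_inner_le : RCLike.re ⟪x, S x⟫_𝕜 ≤ RCLike.re ⟪x, T x⟫_𝕜 := by
    simpa [inner_sub_right] using ((LinearMap.le_def S T).1 hST).re_inner_nonneg_right x
  refine le_of_mul_le_mul_right ?_ (show 0 < ‖x‖ ^ 2 by positivity)
  calc hS.eigenvalues hd i * ‖x‖ ^ 2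
      ≤ RCLike.re ⟪x, S x⟫_𝕜 := eigenvalues_mul_norm_sq_le_re_inner hS hd (by simpa using hxS)
    _ ≤ RCLike.re ⟪x, T x⟫_𝕜 := re_inner_le
    _ ≤ hT.eigenvalues hd i * ‖x‖ ^ 2 :=
      re_inner_le_eigenvalues_mul_norm_sq hT hd (by simpa using hxT)

end Eigenvalues

section HermitianMatrix

variable {𝕜 n : Type*} [RCLike 𝕜] [Fintype n] [DecidableEq n] {A B C : Matrix n n 𝕜}

theorem eigenvalues_le_of_isHermitian_of_le (hA : A.IsHermitian) (hB : B.IsHermitian)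
    (hAB : A ≤ B) (i : n) : hA.eigenvalues i ≤ hB.eigenvalues i := by
  refine eigenvalues_le_of_isSymmetric_of_le _ _ _ ?_ _
  rw [LinearMap.le_def, ← map_sub, Matrix.isPositive_toEuclideanLin_iff]
  exact Matrix.le_iff.1 hAB

theorem re_trace_eq_sum_eigenvalues (hA : A.IsHermitian) :
    RCLike.re A.trace = ∑ i, hA.eigenvalues i := by
  simp [hA.trace_eq_sum_eigenvalues]

theorem sum_abs_eigenvalues_sub_of_le (hA : A.IsHermitian) (hB : B.IsHermitian)
    (hAB : A ≤ B) :
    ∑ i, |hA.eigenvalues i - hB.eigenvalues i| = RCLike.re (B - A).trace := by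
  rw [Matrix.trace_sub, map_sub, re_trace_eq_sum_eigenvalues hA, re_trace_eq_sum_eigenvalues hB,
    ← Finset.sum_sub_distrib]
  refine Finset.sum_congr rfl fun i _ ↦ ?_
  rw [abs_sub_comm, abs_of_nonneg]
  exact sub_nonneg.2 (eigenvalues_le_of_isHermitian_of_le hA hB hAB i)

theorem trace_cfc_eq_sum (hA : A.IsHermitian) (f : ℝ → ℝ) :
    (cfc f A).trace = ∑ i, (f (hA.eigenvalues i) : 𝕜) := by
  rw [hA.cfc_eq, Matrix.IsHermitian.cfc, Unitary.conjStarAlgAut_apply, Matrix.trace_mul_cycle]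
  simp [Matrix.trace_diagonal]

theorem re_trace_posPart_add_re_trace_negPart (hA : A.IsHermitian) :
    RCLike.re A⁺.trace + RCLike.re A⁻.trace = ∑ i, |hA.eigenvalues i| := by
  rw [CFC.posPart_def, CFC.negPart_def, cfcₙ_eq_cfc, cfcₙ_eq_cfc, trace_cfc_eq_sum hA,
    trace_cfc_eq_sum hA]
  simp [← Finset.sum_add_distrib, posPart_add_negPart]

theorem sum_abs_eigenvalues_sub_le_re_trace_add_re_trace (hA : A.IsHermitian)
    (hB : B.IsHermitian) (hAC : A ≤ C) (hBC : B ≤ C) :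
    ∑ i, |hA.eigenvalues i - hB.eigenvalues i| ≤
      RCLike.re (C - A).trace + RCLike.re (C - B).trace := by
  have hC : C.IsHermitian := by simpa using (Matrix.le_iff.1 hAC).isHermitian.add hA
  rw [← sum_abs_eigenvalues_sub_of_le hA hC hAC, ← sum_abs_eigenvalues_sub_of_le hB hC hBC,
    ← Finset.sum_add_distrib]
  refine Finset.sum_le_sum fun i _ ↦ ?_
  rw [abs_sub_comm (hB.eigenvalues i)]
  exact abs_sub_le _ _ _

/-- Mirsky's inequality for the trace norm, from the common upper bound
`B + (A - B)⁺ = A + (A - B)⁻` of `A` and `B`. -/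
theorem sum_abs_eigenvalues_sub_le_sum_abs_eigenvalues (hA : A.IsHermitian)
    (hB : B.IsHermitian) :
    ∑ i, |hA.eigenvalues i - hB.eigenvalues i| ≤ ∑ i, |(hA.sub hB).eigenvalues i| := by
  let C := B + (A - B)⁺
  have C_sub_B : C - B = (A - B)⁺ := add_sub_cancel_left _ _
  have C_sub_A : C - A = (A - B)⁻ := by
    have posPart_eq : (A - B)⁺ = (A - B) + (A - B)⁻ :=
      sub_eq_iff_eq_add.1 (CFC.posPart_sub_negPart _ (hA.sub hB))
    simp only [C, posPart_eq]
    abel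
  have hAC : A ≤ C := sub_nonneg.1 (C_sub_A ▸ CFC.negPart_nonneg _)
  have hBC : B ≤ C := sub_nonneg.1 (C_sub_B ▸ CFC.posPart_nonneg _)
  calc ∑ i, |hA.eigenvalues i - hB.eigenvalues i|
      ≤ RCLike.re (C - A).trace + RCLike.re (C - B).trace :=
        sum_abs_eigenvalues_sub_le_re_trace_add_re_trace hA hB hAC hBC
    _ = RCLike.re (A - B)⁺.trace + RCLike.re (A - B)⁻.trace := by rw [C_sub_A, C_sub_B, add_comm]
    _ = ∑ i, |(hA.sub hB).eigenvalues i| := re_trace_posPart_add_re_trace_negPart _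

end HermitianMatrix

section NegMulLog

theorem monotoneOn_negMulLog_add_id : MonotoneOn (fun x ↦ negMulLog x + x) (Set.Icc 0 1) := by
  have hasDerivAt {x : ℝ} (hx : x ≠ 0) : HasDerivAt (fun x ↦ negMulLog x + x) (-log x) x := by
    simpa using (Real.hasDerivAt_negMulLog hx).fun_add (hasDerivAt_id' x)
  refine monotoneOn_of_hasDerivWithinAt_nonneg (f' := fun x ↦ -log x) (convex_Icc 0 1)
    (by fun_prop) (fun x hx ↦ ?_) fun x hx ↦ ?_ <;> rw [interior_Icc] at hx
  · exact (hasDerivAt hx.1.ne').hasDerivWithinAt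
  · exact neg_nonneg.2 (Real.log_nonpos hx.1.le hx.2.le)

theorem negMulLog_add_le {x y : ℝ} (hx : 0 ≤ x) (hy : 0 ≤ y) :
    negMulLog (x + y) ≤ negMulLog x + negMulLog y := by
  obtain rfl | hx := hx.eq_or_lt
  · simp
  obtain rfl | hy := hy.eq_or_lt
  · simp
  have mul_log_x_le : x * log x ≤ x * log (x + y) := by gcongr; linarith
  have mul_log_y_le : y * log y ≤ y * log (x + y) := by gcongr; linarith
  simp only [negMulLog]
  linarith

theorem abs_negMulLog_sub_negMulLog_le {x y : ℝ} (hx : x ∈ Set.Icc 0 1) (hy : y ∈ Set.Icc 0 1) :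
    |negMulLog x - negMulLog y| ≤ negMulLog |x - y| + |x - y| := by
  wlog hxy : x ≤ y generalizing x y
  · rw [abs_sub_comm, abs_sub_comm x y]
    exact this hy hx (le_of_not_ge hxy)
  have mono : negMulLog x + x ≤ negMulLog y + y := monotoneOn_negMulLog_add_id hx hy hxy
  have subadd : negMulLog (x + (y - x)) ≤ negMulLog x + negMulLog (y - x) :=
    negMulLog_add_le hx.1 (sub_nonneg.2 hxy)
  have nonneg : 0 ≤ negMulLog (y - x) :=
    Real.negMulLog_nonneg (sub_nonneg.2 hxy) (by linarith [hx.1, hy.2])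
  rw [add_sub_cancel] at subadd
  rw [abs_sub_comm x y, abs_of_nonneg (sub_nonneg.2 hxy), abs_le]
  constructor <;> linarith

theorem mul_negMulLog_div {c : ℝ} (hc : c ≠ 0) (x : ℝ) :
    c * negMulLog (x / c) = negMulLog x + x * log c := by
  rw [div_eq_mul_inv, Real.negMulLog_mul]
  simp only [negMulLog, Real.log_inv]
  field_simp

variable {ι : Type*} [Fintype ι] [Nonempty ι]

theorem sum_negMulLog_le_card_mul {x : ι → ℝ} (hx : ∀ i, 0 ≤ x i) :
    ∑ i, negMulLog (x i) ≤ Fintype.card ι * negMulLog ((∑ i, x i) / Fintype.card ι) := by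
  have card_pos : (0 : ℝ) < Fintype.card ι := by positivity
  have jensen := Real.concaveOn_negMulLog.le_map_sum (t := Finset.univ)
    (w := fun _ : ι ↦ (Fintype.card ι : ℝ)⁻¹) (p := x) (by simp) (by simp) (fun i _ ↦ hx i)
  simp only [smul_eq_mul, ← Finset.mul_sum] at jensen
  rwa [inv_mul_le_iff₀ card_pos, inv_mul_eq_div] at jensen

theorem abs_sum_negMulLog_sub_sum_negMulLog_le {x y : ι → ℝ} (hx : ∀ i, x i ∈ Set.Icc 0 1)
    (hy : ∀ i, y i ∈ Set.Icc 0 1) {ε : ℝ} (hε : ε ≤ Fintype.card ι) (hxy : ∑ i, |x i - y i| ≤ ε) :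
    |∑ i, negMulLog (x i) - ∑ i, negMulLog (y i)| ≤
      negMulLog ε + ε * log (Fintype.card ι) + ε := by
  set c : ℝ := (Fintype.card ι : ℝ)
  have c_pos : 0 < c := by positivity
  have sum_nonneg : 0 ≤ ∑ i, |x i - y i| := Finset.sum_nonneg fun i _ ↦ abs_nonneg _
  set δ := ∑ i, |x i - y i|
  have mono : negMulLog (δ / c) + δ / c ≤ negMulLog (ε / c) + ε / c :=
    monotoneOn_negMulLog_add_id ⟨by positivity, (div_le_one c_pos).2 (hxy.trans hε)⟩
      ⟨div_nonneg (sum_nonneg.trans hxy) c_pos.le, (div_le_one c_pos).2 hε⟩ (by gcongr)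
  calc |∑ i, negMulLog (x i) - ∑ i, negMulLog (y i)|
      ≤ ∑ i, |negMulLog (x i) - negMulLog (y i)| := by
        rw [← Finset.sum_sub_distrib]
        exact Finset.abs_sum_le_sum_abs _ _
    _ ≤ ∑ i, negMulLog |x i - y i| + δ := by
        rw [← Finset.sum_add_distrib]
        exact Finset.sum_le_sum fun i _ ↦ abs_negMulLog_sub_negMulLog_le (hx i) (hy i)
    _ ≤ c * negMulLog (δ / c) + δ := by
        gcongr
        exact sum_negMulLog_le_card_mul fun i ↦ abs_nonneg _
    _ = c * (negMulLog (δ / c) + δ / c) := by field_simp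
    _ ≤ c * (negMulLog (ε / c) + ε / c) := by gcongr
    _ = negMulLog ε + ε * log c + ε := by
        rw [mul_add, mul_negMulLog_div c_pos.ne', mul_div_cancel₀ _ c_pos.ne']

end NegMulLog

section Entropy

variable {n : Type*} [Fintype n] [DecidableEq n] {ρ σ : Matrix n n ℂ}

theorem vnEntropy_eq_sum_negMulLog_div_log_two (hρ : ρ.IsHermitian) :
    vnEntropy ρ = (∑ i, negMulLog (hρ.eigenvalues i)) / log 2 := by
  simp [vnEntropy, hρ, negMulLog, logb, ← mul_div_assoc, ← Finset.sum_div, neg_div]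

theorem IsDensityMatrix.eigenvalues_mem_Icc (hρ : IsDensityMatrix ρ) (i : n) :
    hρ.1.isHermitian.eigenvalues i ∈ Set.Icc 0 1 := by
  have sum_eq_one : ∑ j, hρ.1.isHermitian.eigenvalues j = 1 := by
    rw [← re_trace_eq_sum_eigenvalues, hρ.2, RCLike.one_re]
  exact ⟨hρ.1.eigenvalues_nonneg i, sum_eq_one ▸
    Finset.single_le_sum (fun j _ ↦ hρ.1.eigenvalues_nonneg j) (Finset.mem_univ i)⟩

theorem fannes_inequality_general [Nonempty n] (hρ : ρ.IsHermitian) (hσ : σ.IsHermitian)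
    (hρ_mem : ∀ i, hρ.eigenvalues i ∈ Set.Icc 0 1) (hσ_mem : ∀ i, hσ.eigenvalues i ∈ Set.Icc 0 1)
    {ε : ℝ} (hε : ε ≤ Fintype.card n) (hρσ : traceNorm (ρ - σ) ≤ ε) :
    |vnEntropy ρ - vnEntropy σ| ≤
      -(ε * logb 2 ε) + ε * (logb 2 (Fintype.card n) + 1 / log 2) := by
  have log_two_pos : 0 < log 2 := Real.log_pos one_lt_two
  have sum_le : ∑ i, |hρ.eigenvalues i - hσ.eigenvalues i| ≤ ε := by
    rw [traceNorm, dif_pos (hρ.sub hσ)] at hρσ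
    exact (sum_abs_eigenvalues_sub_le_sum_abs_eigenvalues hρ hσ).trans hρσ
  have key := abs_sum_negMulLog_sub_sum_negMulLog_le hρ_mem hσ_mem hε sum_le
  calc |vnEntropy ρ - vnEntropy σ|
      = |∑ i, negMulLog (hρ.eigenvalues i) - ∑ i, negMulLog (hσ.eigenvalues i)| / log 2 := by
        rw [vnEntropy_eq_sum_negMulLog_div_log_two hρ, vnEntropy_eq_sum_negMulLog_div_log_two hσ,
          ← sub_div, abs_div, abs_of_pos log_two_pos]
    _ ≤ (negMulLog ε + ε * log (Fintype.card n) + ε) / log 2 := by gcongr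
    _ = -(ε * logb 2 ε) + ε * (logb 2 (Fintype.card n) + 1 / log 2) := by
        simp only [negMulLog, logb]
        ring

end Entropy

/-- Fannes' inequality. There is a universal constant `K` such that
for all `d ≥ 2`, `ε ∈ [0,1]` and density matrices `ρ, σ` on `ℂ^d` with
`‖ρ − σ‖₁ ≤ ε`, one has `|S(ρ) − S(σ)| ≤ η(ε) + K ε log₂ d`, with `η(x) = −x log₂ x`. -/
theorem fannes_inequality :
    ∃ K : ℝ, ∀ d : ℕ, 2 ≤ d → ∀ ε : ℝ, 0 ≤ ε → ε ≤ 1 →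
      ∀ ρ σ : Matrix (Fin d) (Fin d) ℂ,
        IsDensityMatrix ρ → IsDensityMatrix σ → traceNorm (ρ - σ) ≤ ε →
        |vnEntropy ρ - vnEntropy σ| ≤
          -(ε * Real.logb 2 ε) + K * ε * Real.logb 2 d := by
  refine ⟨1 + 1 / log 2, fun d hd ε hε₀ hε₁ ρ σ hρ hσ hρσ ↦ ?_⟩
  have : Nonempty (Fin d) := ⟨⟨0, by lia⟩⟩
  have two_le : (2 : ℝ) ≤ d := mod_cast hd
  have one_le_logb : 1 ≤ logb 2 d := by
    rwa [Real.le_logb_iff_rpow_le one_lt_two (by positivity), Real.rpow_one]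
  calc |vnEntropy ρ - vnEntropy σ|
      ≤ -(ε * logb 2 ε) + ε * (logb 2 d + 1 / log 2) := by
        simpa using fannes_inequality_general hρ.1.isHermitian hσ.1.isHermitian
          hρ.eigenvalues_mem_Icc hσ.eigenvalues_mem_Icc (by simp; linarith) hρσ
    _ ≤ -(ε * logb 2 ε) + ε * (logb 2 d + 1 / log 2 * logb 2 d) := by
        gcongr
        exact le_mul_of_one_le_right (by positivity) one_le_logb
    _ = -(ε * logb 2 ε) + (1 + 1 / log 2) * ε * logb 2 d := by ring
end

section
/- Gentle measurement lemma: let ρ be a d×d complex positive semidefinite matrix with trace(ρ) ≤ 1, let X be a d×d Hermitian matrix with 0 ≤ X ≤ 1 (i.e. both X and 1 − X positive semidefinite), and suppose Re(trace(ρX)) ≥ 1 − ε for some ε ≥ 0. Then ‖ρ − √X ρ √X‖₁ ≤ √(8ε), where √X is the positive semidefinite square root of X. -/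
open scoped ComplexConjugate ComplexOrder MatrixOrder

/-!
Write `ρ = Bᴴ * B` and `S = √X`, so that `ρ - S * ρ * S = Bᴴ * B - (B * S)ᴴ * (B * S)`. On a unit
eigenvector `u`, a difference `Aᴴ * A - Cᴴ * C` has eigenvalue
`‖A u‖² - ‖C u‖² = (‖A u‖ - ‖C u‖) * (‖A u‖ + ‖C u‖)`; summing over an orthonormal eigenbasis, the
Cauchy–Schwarz inequality bounds its trace norm by `‖A - C‖ * (‖A‖ + ‖C‖)` in Frobenius norms.
Finally `0 ≤ S ≤ 1` gives `(1 - S)² ≤ 1 - S² = 1 - X`, hence `‖B - B * S‖² ≤ tr (ρ * (1 - X))`,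
while `‖B * S‖² ≤ ‖B‖² = tr ρ`.
-/

section StarOrderedRing

variable {R : Type*} [Ring R] [PartialOrder R] [StarRing R] [StarOrderedRing R] {a : R}

theorem mul_self_le_self_of_nonneg_of_le_one (ha : 0 ≤ a) (ha1 : a ≤ 1) : a * a ≤ a := by
  have ha1' : 0 ≤ 1 - a := sub_nonneg.2 ha1
  have hsum : 0 ≤ a * (1 - a) * a + (1 - a) * a * (1 - a) :=
    add_nonneg (conjugate_nonneg_of_nonneg ha1' ha) (conjugate_nonneg_of_nonneg ha ha1')
  rw [← sub_nonneg]
  convert hsum using 1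
  noncomm_ring

theorem one_sub_mul_one_sub_le_one_sub_mul_self (ha : 0 ≤ a) (ha1 : a ≤ 1) :
    (1 - a) * (1 - a) ≤ 1 - a * a := by
  have hle : 0 ≤ a - a * a := sub_nonneg.2 (mul_self_le_self_of_nonneg_of_le_one ha ha1)
  rw [← sub_nonneg]
  convert add_nonneg hle hle using 1
  noncomm_ring

end StarOrderedRing

theorem cfcSqrt_le_one {A : Type*} [CStarAlgebra A] [PartialOrder A] [StarOrderedRing A] {a : A}
    (ha : a ≤ 1) : CFC.sqrt a ≤ 1 := by
  simpa only [CFC.sqrt_one] using CFC.sqrt_le_sqrt a 1 ha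

section TraceInequalities

open Matrix
open scoped Matrix.Norms.Frobenius

variable {𝕜 m n ι : Type*} [RCLike 𝕜] [Fintype m] [Fintype n] [Fintype ι]

theorem trace_mul_le_trace_mul {A B C : Matrix n n 𝕜} (hA : A.PosSemidef) (hBC : B ≤ C) :
    (A * B).trace ≤ (A * C).trace := by
  classical
  obtain ⟨D, rfl⟩ := CStarAlgebra.nonneg_iff_eq_star_mul_self.1 hA.nonneg
  have hnonneg : 0 ≤ (D * (C - B) * Dᴴ).trace :=
    ((Matrix.le_iff.1 hBC).mul_mul_conjTranspose_same D).trace_nonneg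
  rwa [← sub_nonneg, ← trace_sub, ← mul_sub, star_eq_conjTranspose, mul_assoc, trace_mul_comm]

theorem frobenius_norm_sq_eq_re_trace (A : Matrix m n 𝕜) :
    ‖A‖ ^ 2 = RCLike.re (Aᴴ * A).trace := by
  have hnonneg : 0 ≤ ∑ i, ∑ j, ‖A i j‖ ^ 2 := by positivity
  simp only [frobenius_norm_def, Real.rpow_two, ← Real.sqrt_eq_rpow, Real.sq_sqrt hnonneg]
  rw [Finset.sum_comm]
  simp [trace, mul_apply, RCLike.conj_mul, -map_pow, ← RCLike.ofReal_pow]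

theorem frobenius_norm_mul_sq_eq_re_trace (A : Matrix m n 𝕜) (B : Matrix n ι 𝕜) :
    ‖A * B‖ ^ 2 = RCLike.re (Aᴴ * A * (B * Bᴴ)).trace := by
  rw [frobenius_norm_sq_eq_re_trace, conjTranspose_mul, Matrix.mul_assoc, trace_mul_comm]
  simp only [Matrix.mul_assoc]

variable [DecidableEq n]

theorem re_inner_toEuclideanLin_conjTranspose_mul_self (A : Matrix m n 𝕜)
    (x : EuclideanSpace 𝕜 n) :
    RCLike.re (inner 𝕜 x (toEuclideanLin (Aᴴ * A) x)) = ‖toEuclideanLin A x‖ ^ 2 := by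
  classical
  rw [toLpLin_mul_same, LinearMap.comp_apply, toEuclideanLin_conjTranspose_eq_adjoint,
    LinearMap.adjoint_inner_right, inner_self_eq_norm_sq]

theorem sum_norm_sq_toEuclideanLin_apply (A : Matrix m n 𝕜)
    (b : OrthonormalBasis ι 𝕜 (EuclideanSpace 𝕜 n)) :
    ∑ i, ‖toEuclideanLin A (b i)‖ ^ 2 = ‖A‖ ^ 2 := by
  simp only [← re_inner_toEuclideanLin_conjTranspose_mul_self, ← map_sum]
  rw [← LinearMap.trace_eq_sum_inner, toEuclideanLin_eq_toLin_orthonormal, trace_toLin_eq,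
    frobenius_norm_sq_eq_re_trace]

theorem sum_abs_norm_sq_sub_norm_sq_toEuclideanLin_apply_le (A B : Matrix m n 𝕜)
    (b : OrthonormalBasis ι 𝕜 (EuclideanSpace 𝕜 n)) :
    ∑ i, |‖toEuclideanLin A (b i)‖ ^ 2 - ‖toEuclideanLin B (b i)‖ ^ 2| ≤
      ‖A - B‖ * (‖A‖ + ‖B‖) := by
  have cauchySchwarz (C : Matrix m n 𝕜) :
      ∑ i, ‖toEuclideanLin (A - B) (b i)‖ * ‖toEuclideanLin C (b i)‖ ≤ ‖A - B‖ * ‖C‖ := by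
    simpa only [sum_norm_sq_toEuclideanLin_apply, Real.sqrt_sq (norm_nonneg _)] using
      Real.sum_mul_le_sqrt_mul_sqrt Finset.univ
        (fun i ↦ ‖toEuclideanLin (A - B) (b i)‖) (fun i ↦ ‖toEuclideanLin C (b i)‖)
  calc ∑ i, |‖toEuclideanLin A (b i)‖ ^ 2 - ‖toEuclideanLin B (b i)‖ ^ 2|
      ≤ ∑ i, ‖toEuclideanLin (A - B) (b i)‖ *
          (‖toEuclideanLin A (b i)‖ + ‖toEuclideanLin B (b i)‖) := by
        gcongr with i
        rw [sq_sub_sq, abs_mul, abs_of_nonneg (by positivity), mul_comm, map_sub,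
          LinearMap.sub_apply]
        gcongr
        exact abs_norm_sub_norm_le _ _
    _ ≤ ‖A - B‖ * ‖A‖ + ‖A - B‖ * ‖B‖ := by
        simp only [mul_add, Finset.sum_add_distrib]
        exact add_le_add (cauchySchwarz A) (cauchySchwarz B)
    _ = ‖A - B‖ * (‖A‖ + ‖B‖) := (mul_add _ _ _).symm

theorem eigenvalues_conjTranspose_mul_self_sub (A B : Matrix m n 𝕜)
    (h : (Aᴴ * A - Bᴴ * B).IsHermitian) (i : n) :
    h.eigenvalues i = ‖toEuclideanLin A (h.eigenvectorBasis i)‖ ^ 2 -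
      ‖toEuclideanLin B (h.eigenvectorBasis i)‖ ^ 2 := by
  rw [← re_inner_toEuclideanLin_conjTranspose_mul_self,
    ← re_inner_toEuclideanLin_conjTranspose_mul_self, ← map_sub, ← inner_sub_right,
    ← LinearMap.sub_apply, ← map_sub, h.eigenvalues_eq, dotProduct_comm]
  rfl

theorem traceNorm_conjTranspose_mul_self_sub_le (A B : Matrix m n ℂ) :
    traceNorm (Aᴴ * A - Bᴴ * B) ≤ ‖A - B‖ * (‖A‖ + ‖B‖) := by
  have h : (Aᴴ * A - Bᴴ * B).IsHermitian :=
    (isHermitian_conjTranspose_mul_self A).sub (isHermitian_conjTranspose_mul_self B)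
  rw [traceNorm, dif_pos h]
  simp only [eigenvalues_conjTranspose_mul_self_sub A B h]
  exact sum_abs_norm_sq_sub_norm_sq_toEuclideanLin_apply_le A B h.eigenvectorBasis

theorem traceNorm_sub_mul_mul_le {ρ S : Matrix n n ℂ} (hρ : ρ.PosSemidef) (hS : 0 ≤ S)
    (hS1 : S ≤ 1) :
    traceNorm (ρ - S * ρ * S) ≤ 2 * √ρ.trace.re * √(ρ * (1 - S * S)).trace.re := by
  have hSH : Sᴴ = S := hS.posSemidef.1
  obtain ⟨B, hB⟩ : ∃ B : Matrix n n ℂ, ρ = Bᴴ * B :=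
    CStarAlgebra.nonneg_iff_eq_star_mul_self.1 hρ.nonneg
  have hfactor : ρ - S * ρ * S = Bᴴ * B - (B * S)ᴴ * (B * S) := by
    rw [hB, conjTranspose_mul, hSH]
    simp only [mul_assoc]
  have hnormB : ‖B‖ ^ 2 = ρ.trace.re := by rw [frobenius_norm_sq_eq_re_trace, hB]; rfl
  have hnormBS : ‖B * S‖ ≤ ‖B‖ := by
    have hSS : S * S ≤ 1 := (mul_self_le_self_of_nonneg_of_le_one hS hS1).trans hS1
    refine le_of_sq_le_sq ?_ (norm_nonneg B)
    rw [frobenius_norm_mul_sq_eq_re_trace, hSH, ← hB, hnormB]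
    simpa using (Complex.le_def.1 (trace_mul_le_trace_mul hρ hSS)).1
  have hnormSub : ‖B - B * S‖ ^ 2 ≤ (ρ * (1 - S * S)).trace.re := by
    rw [← mul_one_sub, frobenius_norm_mul_sq_eq_re_trace, conjTranspose_sub, conjTranspose_one,
      hSH, ← hB]
    have hle := trace_mul_le_trace_mul hρ (one_sub_mul_one_sub_le_one_sub_mul_self hS hS1)
    exact (Complex.le_def.1 hle).1
  calc traceNorm (ρ - S * ρ * S)
      ≤ ‖B - B * S‖ * (‖B‖ + ‖B * S‖) :=
        hfactor ▸ traceNorm_conjTranspose_mul_self_sub_le B (B * S)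
    _ ≤ ‖B - B * S‖ * (‖B‖ + ‖B‖) := by gcongr
    _ = 2 * ‖B‖ * ‖B - B * S‖ := by ring
    _ ≤ 2 * √ρ.trace.re * √(ρ * (1 - S * S)).trace.re := by
        gcongr
        · exact Real.le_sqrt_of_sq_le hnormB.le
        · exact Real.le_sqrt_of_sq_le hnormSub

end TraceInequalities

theorem gentle_measurement_general {n : Type*} [Fintype n] [DecidableEq n] {ρ X : Matrix n n ℂ}
    (hρ : ρ.PosSemidef) (hX : X.PosSemidef) (hX1 : (1 - X).PosSemidef) :
    traceNorm (ρ - CFC.sqrt X * ρ * CFC.sqrt X) ≤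
      2 * √ρ.trace.re * √(ρ * (1 - X)).trace.re := by
  have hsqrt : CFC.sqrt X ≤ 1 := by
    open scoped Matrix.Norms.L2Operator in
    exact cfcSqrt_le_one (Matrix.le_iff.2 hX1)
  simpa only [CFC.sqrt_mul_sqrt_self X hX.nonneg] using
    traceNorm_sub_mul_mul_le hρ (CFC.sqrt_nonneg X) hsqrt

/-- the gentle measurement lemma. -/
theorem gentle_measurement {d : ℕ} (ρ X : Matrix (Fin d) (Fin d) ℂ)
    (hρ : ρ.PosSemidef) (htr : ρ.trace.re ≤ 1)
    (hX : X.PosSemidef) (hX1 : (1 - X).PosSemidef)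
    (ε : ℝ) (hε : 0 ≤ ε) (h : 1 - ε ≤ ((ρ * X).trace).re) :
    traceNorm (ρ - CFC.sqrt X * ρ * CFC.sqrt X) ≤ Real.sqrt (8 * ε) := by
  have htrace : (ρ * (1 - X)).trace.re ≤ ε := by
    rw [mul_sub, mul_one, Matrix.trace_sub, Complex.sub_re]
    linarith
  calc traceNorm (ρ - CFC.sqrt X * ρ * CFC.sqrt X)
      ≤ 2 * √ρ.trace.re * √(ρ * (1 - X)).trace.re := gentle_measurement_general hρ hX hX1
    _ ≤ 2 * √1 * √ε := by gcongr
    _ = √(4 * ε) := by rw [Real.sqrt_mul (by norm_num)]; norm_num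
    _ ≤ √(8 * ε) := by gcongr; norm_num
end

section
/- Steering (Schrödinger–HJW) theorem: let ψ : Fin dA × Fin dC → ℂ be a unit vector and let ρ be the dA×dA density matrix with entries ρ_{x y} = ∑_c ψ(x,c)·conj(ψ(y,c)). Then for every finite decomposition ρ = ∑_{i=1}^m p_i v_i v_i† with p_i ≥ 0, ∑_i p_i = 1 and unit vectors v_i ∈ ℂ^{dA}, there exists a POVM (M_1,…,M_m) on ℂ^{dC} (each M_i positive semidefinite and ∑_i M_i = 1) such that for each i the dA×dA matrix with entries ∑_{c,c'} M_i(c,c')·ψ(x,c')·conj(ψ(y,c)) equals p_i v_i v_i†. -/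
open scoped ComplexConjugate ComplexOrder

/-!
Regard `ψ` as a matrix `A`, so that `ρ = A * Aᴴ` and obtaining outcome `M` leaves `A * Mᵀ * Aᴴ`.
If `A * Aᴴ = ∑ i, σ i` with all `σ i ≥ 0`, then `0 ≤ σ i ≤ A * Aᴴ`, so the range of `σ i` lies in
that of `A`, onto which `A * A⁺` projects. Hence `A * (A⁺ * σ i * A⁺ᴴ) * Aᴴ = σ i`. The operators
`A⁺ * σ i * A⁺ᴴ` sum to the projection `A⁺ * A` onto the orthogonal complement of the kernel of `A`;
since `A` kills `1 - A⁺ * A`, sharing this deficit out evenly completes them to a POVM.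
-/

section

open Matrix
open scoped MatrixOrder

variable {𝕜 α β γ ι : Type*} [RCLike 𝕜]

theorem mul_cfc_inv_mul_self {R : Type*} [Ring R] [StarRing R] [TopologicalSpace R] [Algebra ℝ R]
    [ContinuousFunctionalCalculus ℝ R IsSelfAdjoint] {a : R} (ha : IsSelfAdjoint a)
    (hfin : (spectrum ℝ a).Finite) : a * (cfc (fun t : ℝ ↦ t⁻¹) a * a) = a := by
  have hcont (f : ℝ → ℝ) : ContinuousOn f (spectrum ℝ a) := hfin.continuousOn f
  calc a * (cfc (fun t : ℝ ↦ t⁻¹) a * a)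
    _ = cfc (fun t : ℝ ↦ t * (t⁻¹ * t)) a := by
      rw [cfc_mul _ _ a (hcont _) (hcont _), cfc_mul _ _ a (hcont _) (hcont _), cfc_id' ℝ a]
    _ = a := by simp only [← mul_assoc, mul_inv_mul_cancel, cfc_id' ℝ a]

section Pseudoinverse

variable [Fintype α] [Fintype γ] [DecidableEq γ]

/-- The Moore–Penrose pseudoinverse, computed as `(Aᴴ * A)⁺ * Aᴴ`. The functional calculus inverts
the nonzero eigenvalues of `Aᴴ * A` and keeps its kernel, since `0⁻¹ = 0` in `ℝ`. -/
noncomputable def pseudoinverse (A : Matrix α γ 𝕜) : Matrix γ α 𝕜 :=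
  cfc (fun t : ℝ ↦ t⁻¹) (Aᴴ * A) * Aᴴ

theorem mul_pseudoinverse_mul (A : Matrix α γ 𝕜) : A * (pseudoinverse A * A) = A := by
  have hgram : Aᴴ * A * (pseudoinverse A * A - 1) = 0 := by
    rw [pseudoinverse, Matrix.mul_assoc (cfc _ _), Matrix.mul_sub, Matrix.mul_one,
      mul_cfc_inv_mul_self (isHermitian_conjTranspose_mul_self A) (Set.toFinite _), sub_self]
  rw [conjTranspose_mul_self_mul_eq_zero, Matrix.mul_sub, Matrix.mul_one] at hgram
  exact sub_eq_zero.mp hgram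

theorem isHermitian_pseudoinverse_mul (A : Matrix α γ 𝕜) : (pseudoinverse A * A).IsHermitian := by
  have hG : IsSelfAdjoint (Aᴴ * A) := isHermitian_conjTranspose_mul_self A
  have hcomm : Commute (cfc (fun t : ℝ ↦ t⁻¹) (Aᴴ * A)) (Aᴴ * A) := (Commute.refl _).cfc_real _
  rw [pseudoinverse, Matrix.mul_assoc]
  exact (IsSelfAdjoint.commute_iff (cfc_predicate _ _) hG).mp hcomm

theorem isStarProjection_pseudoinverse_mul (A : Matrix α γ 𝕜) :
    IsStarProjection (pseudoinverse A * A) where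
  isIdempotentElem := by rw [IsIdempotentElem, Matrix.mul_assoc, mul_pseudoinverse_mul]
  isSelfAdjoint := isHermitian_pseudoinverse_mul A

end Pseudoinverse

theorem mul_eq_zero_of_nonneg_of_le [Finite β] [Fintype γ] {B : Matrix β γ 𝕜} {σ τ : Matrix γ γ 𝕜}
    (hσ : 0 ≤ σ) (hστ : σ ≤ τ) (hB : B * τ = 0) : B * σ = 0 := by
  classical
  have hle : B * σ * Bᴴ ≤ 0 := by
    have hdiff := (le_iff.mp hστ).mul_mul_conjTranspose_same B
    rwa [Matrix.mul_sub, hB, Matrix.sub_mul, Matrix.zero_mul] at hdiff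
  have hzero : B * σ * Bᴴ = 0 :=
    le_antisymm hle (hσ.posSemidef.mul_mul_conjTranspose_same B).nonneg
  obtain ⟨S, rfl⟩ := CStarAlgebra.nonneg_iff_eq_star_mul_self.mp hσ
  rw [star_eq_conjTranspose] at hzero ⊢
  have hBS : (B * Sᴴ) * (B * Sᴴ)ᴴ = 0 := by
    rw [conjTranspose_mul, conjTranspose_conjTranspose, ← hzero]
    simp only [Matrix.mul_assoc]
  rw [← Matrix.mul_assoc, self_mul_conjTranspose_eq_zero.mp hBS, Matrix.zero_mul]

section SteeringPOVM

variable [Fintype α] [Fintype γ] [DecidableEq γ]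

theorem mul_pseudoinverse_mul_of_le {A : Matrix α γ 𝕜} {σ : Matrix α α 𝕜}
    (hσ : 0 ≤ σ) (hle : σ ≤ A * Aᴴ) : A * pseudoinverse A * σ = σ := by
  classical
  have hrange : (1 - A * pseudoinverse A) * (A * Aᴴ) = 0 := by
    rw [← Matrix.mul_assoc, Matrix.sub_mul, Matrix.mul_assoc A, mul_pseudoinverse_mul,
      Matrix.one_mul, sub_self, Matrix.zero_mul]
  have hσ_range := mul_eq_zero_of_nonneg_of_le hσ hle hrange
  rw [Matrix.sub_mul, Matrix.one_mul] at hσ_range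
  exact (sub_eq_zero.mp hσ_range).symm

variable [Fintype ι]

/-- The measurement that steers a state with coefficient matrix `A` to the ensemble `σ`, up to
transposition of its effects. The first term does the steering; the second one is annihilated by `A`
and makes the effects add up to `1`. -/
noncomputable def steeringEffect (A : Matrix α γ 𝕜) (σ : ι → Matrix α α 𝕜) (i : ι) :
    Matrix γ γ 𝕜 :=
  pseudoinverse A * σ i * (pseudoinverse A)ᴴ +
    (Fintype.card ι : ℝ)⁻¹ • (1 - pseudoinverse A * A)

theorem posSemidef_steeringEffect (A : Matrix α γ 𝕜) {σ : ι → Matrix α α 𝕜} {i : ι}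
    (hσ : (σ i).PosSemidef) : (steeringEffect A σ i).PosSemidef :=
  have hdeficit : (1 - pseudoinverse A * A).PosSemidef :=
    (isStarProjection_pseudoinverse_mul A).one_sub.nonneg.posSemidef
  (hσ.mul_mul_conjTranspose_same _).add (hdeficit.smul (by positivity))

theorem sum_steeringEffect [Nonempty ι] {A : Matrix α γ 𝕜} {σ : ι → Matrix α α 𝕜}
    (hsum : A * Aᴴ = ∑ i, σ i) : ∑ i, steeringEffect A σ i = 1 := by
  have hproj : pseudoinverse A * (A * Aᴴ) * (pseudoinverse A)ᴴ = pseudoinverse A * A := by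
    have hidem := (isStarProjection_pseudoinverse_mul A).isIdempotentElem.eq
    nth_rw 2 [← (isHermitian_pseudoinverse_mul A).eq] at hidem
    simpa only [conjTranspose_mul, Matrix.mul_assoc] using hidem
  have hcard : (Fintype.card ι : ℝ) ≠ 0 := Nat.cast_ne_zero.mpr Fintype.card_ne_zero
  simp only [steeringEffect]
  rw [Finset.sum_add_distrib, ← Matrix.sum_mul, ← Matrix.mul_sum, ← hsum, hproj, Finset.sum_const,
    Finset.card_univ, ← Nat.cast_smul_eq_nsmul ℝ, smul_inv_smul₀ hcard, add_sub_cancel]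

theorem mul_steeringEffect_mul_conjTranspose {A : Matrix α γ 𝕜} {σ : ι → Matrix α α 𝕜} {i : ι}
    (hσ : 0 ≤ σ i) (hle : σ i ≤ A * Aᴴ) : A * steeringEffect A σ i * Aᴴ = σ i := by
  have hleft : A * pseudoinverse A * σ i = σ i := mul_pseudoinverse_mul_of_le hσ hle
  have hright : σ i * (A * pseudoinverse A)ᴴ = σ i := by
    simpa only [conjTranspose_mul, hσ.posSemidef.isHermitian.eq] using congrArg conjTranspose hleft
  have hkill : A * (1 - pseudoinverse A * A) = 0 := by
    rw [Matrix.mul_sub, Matrix.mul_one, mul_pseudoinverse_mul, sub_self]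
  calc A * steeringEffect A σ i * Aᴴ
    _ = A * pseudoinverse A * σ i * (A * pseudoinverse A)ᴴ := by
      rw [steeringEffect, Matrix.mul_add, Matrix.mul_smul, hkill, smul_zero, add_zero,
        conjTranspose_mul]
      simp only [Matrix.mul_assoc]
    _ = σ i := by rw [hleft, hright]

end SteeringPOVM

theorem of_curry_mul_transpose_mul_conjTranspose {R : Type*} [CommSemiring R] [StarRing R]
    [Fintype γ] (ψ : α × γ → R) (M : Matrix γ γ R) :
    of (Function.curry ψ) * Mᵀ * (of (Function.curry ψ))ᴴ =
      of fun x y ↦ ∑ c, ∑ c', M c c' * ψ (x, c') * conj (ψ (y, c)) := by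
  ext x y
  simp only [mul_apply, Finset.sum_mul, of_apply, Function.curry_apply, transpose_apply,
    conjTranspose_apply, starRingEnd_apply, mul_comm (ψ _)]

theorem steering_general [Finite α] [Fintype γ] [DecidableEq γ] [Fintype ι] [Nonempty ι]
    (ψ : α × γ → 𝕜) (σ : ι → Matrix α α 𝕜) (hσ : ∀ i, (σ i).PosSemidef)
    (hdecomp : (of fun x y ↦ ∑ c, ψ (x, c) * conj (ψ (y, c))) = ∑ i, σ i) :
    ∃ M : ι → Matrix γ γ 𝕜,
      (∀ i, (M i).PosSemidef) ∧ (∑ i, M i = 1) ∧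
      ∀ i, (of fun x y ↦ ∑ c, ∑ c', M i c c' * ψ (x, c') * conj (ψ (y, c))) = σ i := by
  have := Fintype.ofFinite α
  let A : Matrix α γ 𝕜 := of (Function.curry ψ)
  have hsum : A * Aᴴ = ∑ i, σ i := hdecomp
  have hle (i : ι) : σ i ≤ A * Aᴴ :=
    hsum ▸ Finset.single_le_sum (fun j _ ↦ (hσ j).nonneg) (Finset.mem_univ i)
  refine ⟨fun i ↦ (steeringEffect A σ i)ᵀ, fun i ↦ (posSemidef_steeringEffect A (hσ i)).transpose,
    ?_, fun i ↦ ?_⟩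
  · rw [← transpose_sum, sum_steeringEffect hsum, transpose_one]
  · rw [← of_curry_mul_transpose_mul_conjTranspose, transpose_transpose]
    exact mul_steeringEffect_mul_conjTranspose (hσ i).nonneg (hle i)

end

/-- the steering (Schrödinger–HJW) theorem. -/
theorem steering {dA dC m : ℕ}
    (ψ : Fin dA × Fin dC → ℂ) (hψ : ∑ x, ‖ψ x‖ ^ 2 = 1)
    (ρ : Matrix (Fin dA) (Fin dA) ℂ)
    (hρ : ρ = Matrix.of fun x y => ∑ c, ψ (x, c) * conj (ψ (y, c)))
    (p : Fin m → ℝ) (hp : ∀ i, 0 ≤ p i) (hpsum : ∑ i, p i = 1)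
    (v : Fin m → Fin dA → ℂ) (hv : ∀ i, ∑ x, ‖v i x‖ ^ 2 = 1)
    (hdecomp : ρ = ∑ i, (p i : ℂ) • Matrix.of fun x y => v i x * conj (v i y)) :
    ∃ M : Fin m → Matrix (Fin dC) (Fin dC) ℂ,
      (∀ i, (M i).PosSemidef) ∧ (∑ i, M i = 1) ∧
      ∀ i, (Matrix.of fun x y => ∑ c, ∑ c', M i c c' * ψ (x, c') * conj (ψ (y, c)))
            = (p i : ℂ) • Matrix.of fun x y => v i x * conj (v i y) := by
  have : Nonempty (Fin m) := not_isEmpty_iff.mp fun _ ↦ by simp at hpsum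
  exact steering_general ψ _ (fun i ↦ (Matrix.posSemidef_vecMulVec_self_star (v i)).smul
    (Complex.zero_le_real.mpr (hp i))) (hρ.symm.trans hdecomp)
end

section
/- Single-copy upper bound on the entanglement of assistance: let ρ be a density matrix with rows and columns indexed by Fin dA × Fin dB. Then for every finite decomposition ρ = ∑_{i=1}^m p_i v_i v_i† with p_i ≥ 0, ∑_i p_i = 1 and unit vectors v_i, the average entanglement satisfies ∑_i p_i E(v_i) ≤ min{ S(tr_B ρ), S(tr_A ρ) }. -/
/-!
For an orthonormal basis `b`, the outcome distribution of measuring `σ` in `b` is the image of the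
spectrum of `σ` under the doubly stochastic matrix `|⟪e i, b j⟫|²`, `e` an eigenbasis of `σ`, so by
Jensen's inequality the measurement entropy is at least the von Neumann entropy, with equality for
`b = e`. Hence the von Neumann entropy is a minimum of functions that are concave in `σ`, and is
itself concave. Since `E (v i)` is the entropy of the reduced state of `v i`, and partial traces are
linear, this bounds the average entanglement by `S (tr_B ρ)`. The bound by `S (tr_A ρ)` follows by
exchanging the two systems: if `M` is the coefficient matrix of `v`, the reduced states are `M * Mᴴ`
and `(Mᴴ * M)ᵀ`, which have the same nonzero eigenvalues.
-/

open scoped ComplexConjugate ComplexOrder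

/-- The entropy of entanglement of a bipartite pure-state vector:
the entropy of its reduced state on the first factor. -/
noncomputable def entE {dA dB : ℕ} (v : Fin dA × Fin dB → ℂ) : ℝ :=
  vnEntropy (Matrix.of fun i i' => ∑ k, v (i, k) * conj (v (i', k)))

open Real Matrix
open scoped InnerProductSpace

section Peierls

variable {𝕜 E ι κ : Type*} [RCLike 𝕜] [NormedAddCommGroup E] [InnerProductSpace 𝕜 E]
  [Fintype ι] [Fintype κ] {T : E →ₗ[𝕜] E} {e : OrthonormalBasis ι 𝕜 E} {μ : ι → ℝ}

theorem re_inner_map_self_eq_sum_of_eigenbasis (hT : ∀ i, T (e i) = (μ i : 𝕜) • e i) (x : E) :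
    RCLike.re ⟪x, T x⟫_𝕜 = ∑ i, ‖⟪e i, x⟫_𝕜‖ ^ 2 * μ i := by
  have hTx : T x = ∑ i, (⟪e i, x⟫_𝕜 * μ i) • e i := by
    conv_lhs => rw [← e.sum_repr' x]
    simp only [map_sum, map_smul, hT, smul_smul]
  rw [hTx, inner_sum, map_sum]
  refine Finset.sum_congr rfl fun i _ => ?_
  rw [inner_smul_right, ← inner_conj_symm x (e i), mul_right_comm, RCLike.mul_conj]
  norm_cast

theorem sum_eigenvalues_le_sum_re_inner {f : ℝ → ℝ} {s : Set ℝ} (hf : ConcaveOn ℝ s f)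
    (hT : ∀ i, T (e i) = (μ i : 𝕜) • e i) (hμ : ∀ i, μ i ∈ s) (b : OrthonormalBasis κ 𝕜 E) :
    ∑ i, f (μ i) ≤ ∑ j, f (RCLike.re ⟪b j, T (b j)⟫_𝕜) :=
  calc
    ∑ i, f (μ i) = ∑ i, (∑ j, ‖⟪e i, b j⟫_𝕜‖ ^ 2) * f (μ i) := by
      simp only [b.sum_sq_norm_inner_left, e.norm_eq_one, one_pow, one_mul]
    _ = ∑ j, ∑ i, ‖⟪e i, b j⟫_𝕜‖ ^ 2 * f (μ i) := by
      simp only [Finset.sum_mul]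
      exact Finset.sum_comm
    _ ≤ ∑ j, f (∑ i, ‖⟪e i, b j⟫_𝕜‖ ^ 2 * μ i) := by
      refine Finset.sum_le_sum fun j _ => hf.le_map_sum (fun i _ => sq_nonneg _) ?_ fun i _ => hμ i
      rw [e.sum_sq_norm_inner_right, b.norm_eq_one, one_pow]
    _ = ∑ j, f (RCLike.re ⟪b j, T (b j)⟫_𝕜) := by
      simp only [re_inner_map_self_eq_sum_of_eigenbasis hT]

end Peierls

section VonNeumannEntropy

theorem convex_setOf_posSemidef {𝕜 n : Type*} [RCLike 𝕜] :
    Convex ℝ {σ : Matrix n n 𝕜 | σ.PosSemidef} :=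
  fun _ hσ _ hτ _ _ ha hb _ => (hσ.smul ha).add (hτ.smul hb)

variable {m n ι : Type*} [Fintype m] [DecidableEq m] [Fintype n] [DecidableEq n] [Fintype ι]

theorem vnEntropy_eq_sum_negMulLog {σ : Matrix n n ℂ} (hσ : σ.IsHermitian) :
    vnEntropy σ = (∑ i, negMulLog (hσ.eigenvalues i)) / log 2 := by
  simp only [vnEntropy, dif_pos hσ, negMulLog, logb, Finset.sum_div, ← Finset.sum_neg_distrib,
    mul_div_assoc, neg_mul, neg_div]

/-- The Shannon entropy (in bits) of the outcome of measuring the state `σ` in the orthonormal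
basis `b`; the `j`-th outcome has probability `⟪b j, σ (b j)⟫`. -/
noncomputable def measurementEntropy (b : OrthonormalBasis ι ℂ (EuclideanSpace ℂ n))
    (σ : Matrix n n ℂ) : ℝ :=
  (∑ j, negMulLog (RCLike.re ⟪b j, σ.toEuclideanLin (b j)⟫_ℂ)) / log 2

theorem toEuclideanLin_eigenvectorBasis {σ : Matrix n n ℂ} (hσ : σ.IsHermitian) (i : n) :
    σ.toEuclideanLin (hσ.eigenvectorBasis i) =
      (hσ.eigenvalues i : ℂ) • hσ.eigenvectorBasis i :=
  WithLp.ofLp_injective 2 (hσ.mulVec_eigenvectorBasis i)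

theorem vnEntropy_le_measurementEntropy {σ : Matrix n n ℂ} (hσ : σ.PosSemidef)
    (b : OrthonormalBasis ι ℂ (EuclideanSpace ℂ n)) :
    vnEntropy σ ≤ measurementEntropy b σ := by
  rw [vnEntropy_eq_sum_negMulLog hσ.isHermitian]
  exact div_le_div_of_nonneg_right
    (sum_eigenvalues_le_sum_re_inner concaveOn_negMulLog
      (toEuclideanLin_eigenvectorBasis hσ.isHermitian) hσ.eigenvalues_nonneg b)
    (log_nonneg one_le_two)

theorem measurementEntropy_eigenvectorBasis {σ : Matrix n n ℂ} (hσ : σ.IsHermitian) :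
    measurementEntropy hσ.eigenvectorBasis σ = vnEntropy σ := by
  simp [measurementEntropy, vnEntropy_eq_sum_negMulLog hσ, toEuclideanLin_eigenvectorBasis hσ]

theorem concaveOn_measurementEntropy (b : OrthonormalBasis ι ℂ (EuclideanSpace ℂ n)) :
    ConcaveOn ℝ {σ : Matrix n n ℂ | σ.PosSemidef} (measurementEntropy b) := by
  refine ⟨convex_setOf_posSemidef, fun σ hσ τ hτ a c ha hc hac => ?_⟩
  have prob_nonneg {ω : Matrix n n ℂ} (hω : ω.PosSemidef) (j : ι) :
      0 ≤ RCLike.re ⟪b j, ω.toEuclideanLin (b j)⟫_ℂ :=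
    (isPositive_toEuclideanLin_iff.mpr hω).re_inner_nonneg_right (b j)
  have prob_affine (j : ι) :
      RCLike.re ⟪b j, (a • σ + c • τ).toEuclideanLin (b j)⟫_ℂ =
        a • RCLike.re ⟪b j, σ.toEuclideanLin (b j)⟫_ℂ +
          c • RCLike.re ⟪b j, τ.toEuclideanLin (b j)⟫_ℂ := by
    rw [← Complex.coe_smul a σ, ← Complex.coe_smul c τ]
    simp only [map_add, map_smul, LinearMap.add_apply, LinearMap.smul_apply, inner_add_right,
      inner_smul_right, RCLike.re_to_complex, Complex.re_ofReal_mul, smul_eq_mul]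
  simp only [measurementEntropy, smul_eq_mul, ← mul_div_assoc, ← add_div, Finset.mul_sum,
    ← Finset.sum_add_distrib, prob_affine]
  gcongr with j
  exact concaveOn_negMulLog.2 (prob_nonneg hσ j) (prob_nonneg hτ j) ha hc hac

theorem concaveOn_vnEntropy : ConcaveOn ℝ {σ : Matrix n n ℂ | σ.PosSemidef} vnEntropy := by
  refine ⟨convex_setOf_posSemidef, fun σ hσ τ hτ a c ha hc hac => ?_⟩
  have hω : (a • σ + c • τ).PosSemidef := convex_setOf_posSemidef hσ hτ ha hc hac
  let b := hω.isHermitian.eigenvectorBasis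
  calc
    a • vnEntropy σ + c • vnEntropy τ
        ≤ a • measurementEntropy b σ + c • measurementEntropy b τ := by
      gcongr
      · exact vnEntropy_le_measurementEntropy hσ b
      · exact vnEntropy_le_measurementEntropy hτ b
    _ ≤ measurementEntropy b (a • σ + c • τ) :=
      (concaveOn_measurementEntropy b).2 hσ hτ ha hc hac
    _ = vnEntropy (a • σ + c • τ) := measurementEntropy_eigenvectorBasis hω.isHermitian

theorem vnEntropy_eq_sum_roots_charpoly {σ : Matrix n n ℂ} (hσ : σ.IsHermitian) :
    vnEntropy σ = (σ.charpoly.roots.map fun z => negMulLog z.re).sum / log 2 := by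
  rw [vnEntropy_eq_sum_negMulLog hσ, hσ.roots_charpoly_eq_eigenvalues, Multiset.map_map]
  rfl

theorem vnEntropy_transpose (σ : Matrix n n ℂ) : vnEntropy σᵀ = vnEntropy σ := by
  by_cases hσ : σ.IsHermitian
  · rw [vnEntropy_eq_sum_roots_charpoly hσ,
      vnEntropy_eq_sum_roots_charpoly (isHermitian_transpose_iff.mpr hσ), charpoly_transpose]
  · rw [vnEntropy, vnEntropy, dif_neg hσ, dif_neg (mt isHermitian_transpose_iff.mp hσ)]

theorem sum_map_roots_X_pow_mul {R M : Type*} [CommRing R] [IsDomain R] [AddCommMonoid M]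
    {f : R → M} (hf : f 0 = 0) (k : ℕ) {q : Polynomial R} (hq : q ≠ 0) :
    ((Polynomial.X ^ k * q).roots.map f).sum = (q.roots.map f).sum := by
  rw [Polynomial.roots_mul (mul_ne_zero (pow_ne_zero k Polynomial.X_ne_zero) hq)]
  simp [Multiset.map_nsmul, Multiset.sum_nsmul, hf]

theorem vnEntropy_mul_comm {A : Matrix m n ℂ} {B : Matrix n m ℂ} (hAB : (A * B).IsHermitian)
    (hBA : (B * A).IsHermitian) : vnEntropy (A * B) = vnEntropy (B * A) := by
  have sum_X_pow_mul (k : ℕ) {q : Polynomial ℂ} (hq : q.Monic) :=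
    sum_map_roots_X_pow_mul (f := fun z : ℂ => negMulLog z.re) negMulLog_zero k hq.ne_zero
  rw [vnEntropy_eq_sum_roots_charpoly hAB, vnEntropy_eq_sum_roots_charpoly hBA,
    ← sum_X_pow_mul (Fintype.card n) (charpoly_monic (A * B)), charpoly_mul_comm',
    sum_X_pow_mul (Fintype.card m) (charpoly_monic (B * A))]

end VonNeumannEntropy

section Bipartite

variable {dA dB : ℕ}

theorem entE_comp_swap (v : Fin dA × Fin dB → ℂ) : entE (v ∘ Prod.swap) = entE v := by
  let M : Matrix (Fin dA) (Fin dB) ℂ := of fun i k => v (i, k)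
  calc
    entE (v ∘ Prod.swap) = vnEntropy (Mᴴ * M)ᵀ := by rw [transpose_mul]; rfl
    _ = vnEntropy (Mᴴ * M) := vnEntropy_transpose _
    _ = vnEntropy (M * Mᴴ) :=
      vnEntropy_mul_comm (isHermitian_conjTranspose_mul_self M)
        (isHermitian_mul_conjTranspose_self M)
    _ = entE v := rfl

theorem ptraceB_eq_sum_submatrix (ρ : Matrix (Fin dA × Fin dB) (Fin dA × Fin dB) ℂ) :
    ptraceB ρ = ∑ k, ρ.submatrix (·, k) (·, k) := by
  ext i i'
  simp [ptraceB, Matrix.sum_apply]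

theorem posSemidef_ptraceB {ρ : Matrix (Fin dA × Fin dB) (Fin dA × Fin dB) ℂ}
    (hρ : ρ.PosSemidef) : (ptraceB ρ).PosSemidef := by
  rw [ptraceB_eq_sum_submatrix]
  exact posSemidef_sum _ fun k _ => hρ.submatrix _

theorem ptraceB_sum_smul {ι R : Type*} [Fintype ι] [DistribSMul R ℂ] (p : ι → R)
    (ρ : ι → Matrix (Fin dA × Fin dB) (Fin dA × Fin dB) ℂ) :
    ptraceB (∑ i, p i • ρ i) = ∑ i, p i • ptraceB (ρ i) := by
  ext a a'
  simp only [ptraceB, of_apply, Matrix.sum_apply, Matrix.smul_apply, Finset.smul_sum]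
  exact Finset.sum_comm

variable {ι : Type*} [Fintype ι] {p : ι → ℝ}

theorem sum_mul_entE_le_vnEntropy_ptraceB (hp : ∀ i, 0 ≤ p i) (hpsum : ∑ i, p i = 1)
    (v : ι → Fin dA × Fin dB → ℂ) :
    ∑ i, p i * entE (v i) ≤
      vnEntropy (ptraceB (∑ i, (p i : ℂ) • vecMulVec (v i) (star (v i)))) := by
  simp only [Complex.coe_smul, ptraceB_sum_smul]
  exact concaveOn_vnEntropy.le_map_sum (fun i _ => hp i) hpsum
    fun i _ => posSemidef_ptraceB (posSemidef_vecMulVec_self_star (v i))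

theorem sum_mul_entE_le_vnEntropy_ptraceA (hp : ∀ i, 0 ≤ p i) (hpsum : ∑ i, p i = 1)
    (v : ι → Fin dA × Fin dB → ℂ) :
    ∑ i, p i * entE (v i) ≤
      vnEntropy (ptraceA (∑ i, (p i : ℂ) • vecMulVec (v i) (star (v i)))) := by
  have h_swap : ptraceA (∑ i, (p i : ℂ) • vecMulVec (v i) (star (v i))) =
      ptraceB (∑ i, (p i : ℂ) • vecMulVec (v i ∘ Prod.swap) (star (v i ∘ Prod.swap))) := by
    ext k k'
    simp [ptraceA, ptraceB, Matrix.sum_apply, vecMulVec_apply]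
  simpa only [h_swap, entE_comp_swap] using
    sum_mul_entE_le_vnEntropy_ptraceB hp hpsum fun i => v i ∘ Prod.swap

end Bipartite

theorem average_entanglement_le_min_entropy_general {dA dB : ℕ} {ι : Type*} [Fintype ι]
    (ρ : Matrix (Fin dA × Fin dB) (Fin dA × Fin dB) ℂ)
    (p : ι → ℝ) (hp : ∀ i, 0 ≤ p i) (hpsum : ∑ i, p i = 1)
    (v : ι → Fin dA × Fin dB → ℂ)
    (hdecomp : ρ = ∑ i, (p i : ℂ) • Matrix.of fun x y => v i x * conj (v i y)) :
    ∑ i, p i * entE (v i) ≤ min (vnEntropy (ptraceB ρ)) (vnEntropy (ptraceA ρ)) := by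
  subst hdecomp
  exact le_min (sum_mul_entE_le_vnEntropy_ptraceB hp hpsum v)
    (sum_mul_entE_le_vnEntropy_ptraceA hp hpsum v)

/-- single-copy upper bound on the entanglement of assistance. -/
theorem average_entanglement_le_min_entropy {dA dB m : ℕ}
    (ρ : Matrix (Fin dA × Fin dB) (Fin dA × Fin dB) ℂ) (hρ : IsDensityMatrix ρ)
    (p : Fin m → ℝ) (hp : ∀ i, 0 ≤ p i) (hpsum : ∑ i, p i = 1)
    (v : Fin m → Fin dA × Fin dB → ℂ) (hv : ∀ i, ∑ x, ‖v i x‖ ^ 2 = 1)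
    (hdecomp : ρ = ∑ i, (p i : ℂ) • Matrix.of fun x y => v i x * conj (v i y)) :
    ∑ i, p i * entE (v i) ≤ min (vnEntropy (ptraceB ρ)) (vnEntropy (ptraceA ρ)) :=
  average_entanglement_le_min_entropy_general ρ p hp hpsum v hdecomp
end

section
/- Every state in the antisymmetric subspace of ℂ³⊗ℂ³ is a singlet: if M is a 3×3 complex matrix with Mᵀ = −M and Frobenius norm 1 (∑_{i,k}|M_{ik}|² = 1), then the multiset of eigenvalues of M M† is {1/2, 1/2, 0}; in particular the entropy of entanglement of the bipartite pure state with coefficient matrix M equals 1. -/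
open Matrix
open scoped ComplexConjugate ComplexOrder

/- A skew-symmetric `3 × 3` matrix `M` is `w ↦ v ⨯₃ w` for some vector `v`, and `Mᴴ` is then
`w ↦ -(star v ⨯₃ w)`. The expansion of the vector triple product `v ⨯₃ (star v ⨯₃ w)` gives
`M * Mᴴ = (v ⬝ᵥ star v) • 1 - (star v) vᵀ`, a rank-one perturbation of a scalar matrix, with
eigenvalues `v ⬝ᵥ star v` (twice) and `0`. The squared Frobenius norm of `M` is
`2 * (v ⬝ᵥ star v)`. -/

open Polynomial in
theorem charpoly_scalar_sub_vecMulVec {n R : Type*} [Fintype n] [DecidableEq n] [Nonempty n]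
    [CommRing R] (c : R) (u v : n → R) :
    (scalar n c - vecMulVec u v).charpoly =
      (X - C c) ^ (Fintype.card n - 1) * (X - C (c - u ⬝ᵥ v)) := by
  have hshift : scalar n c - vecMulVec u v = vecMulVec (-u) v - scalar n (-c) := by
    rw [neg_vecMulVec, map_neg]
    abel
  obtain ⟨k, hk⟩ : ∃ k, Fintype.card n = k + 1 := Nat.exists_eq_succ_of_ne_zero Fintype.card_ne_zero
  rw [hshift, charpoly_sub_scalar, charpoly_vecMulVec, hk]
  simp only [add_tsub_cancel_right, neg_dotProduct, sub_comp, mul_comp, C_comp, X_pow_comp,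
    neg_comp, C_neg, C_sub, smul_eq_C_mul]
  ring

section CrossMatrix

variable {R : Type*} [CommRing R]

/-- The matrix of the linear map `w ↦ v ⨯₃ w`, written out in entries so that its transpose can be
read off. -/
def crossMatrix (v : Fin 3 → R) : Matrix (Fin 3) (Fin 3) R :=
  !![0, -v 2, v 1; v 2, 0, -v 0; -v 1, v 0, 0]

theorem crossMatrix_mulVec (v w : Fin 3 → R) : crossMatrix v *ᵥ w = v ⨯₃ w := by
  ext i
  fin_cases i <;> simp [crossMatrix, cross_apply, mulVec_eq_sum, Fin.sum_univ_three] <;> ring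

theorem crossMatrix_mul_crossMatrix (u v : Fin 3 → R) :
    crossMatrix u * crossMatrix v = vecMulVec v u - scalar (Fin 3) (u ⬝ᵥ v) := by
  refine mulVec_injective (funext fun w => ?_)
  calc (crossMatrix u * crossMatrix v) *ᵥ w
      = u ⨯₃ (v ⨯₃ w) := by rw [← mulVec_mulVec, crossMatrix_mulVec, crossMatrix_mulVec]
    _ = (u ⬝ᵥ w) • v - (v ⬝ᵥ u) • w := cross_cross_eq_smul_sub_smul' u v w
    _ = (vecMulVec v u - scalar (Fin 3) (u ⬝ᵥ v)) *ᵥ w := by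
      rw [sub_mulVec, vecMulVec_mulVec, op_smul_eq_smul, dotProduct_comm v u, scalar_apply,
        ← smul_one_eq_diagonal, smul_mulVec, one_mulVec]

theorem exists_crossMatrix_eq_of_transpose_eq_neg [IsAddTorsionFree R]
    {M : Matrix (Fin 3) (Fin 3) R} (hM : Mᵀ = -M) : ∃ v, crossMatrix v = M := by
  have hskew (i j : Fin 3) : M j i = -M i j := congrFun₂ hM i j
  have hdiag (i : Fin 3) : M i i = 0 := self_eq_neg.mp (hskew i i)
  refine ⟨![M 2 1, M 0 2, M 1 0], ?_⟩
  ext i j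
  fin_cases i <;> fin_cases j <;>
    simp [crossMatrix, hdiag, hskew 2 1, hskew 0 2, hskew 1 0]

variable [StarRing R]

theorem conjTranspose_crossMatrix (v : Fin 3 → R) :
    (crossMatrix v)ᴴ = -crossMatrix (star v) := by
  ext i j
  fin_cases i <;> fin_cases j <;> simp [crossMatrix]

theorem crossMatrix_mul_conjTranspose (v : Fin 3 → R) :
    crossMatrix v * (crossMatrix v)ᴴ =
      scalar (Fin 3) (v ⬝ᵥ star v) - vecMulVec (star v) v := by
  rw [conjTranspose_crossMatrix, mul_neg, crossMatrix_mul_crossMatrix, neg_sub]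

open Polynomial in
theorem charpoly_crossMatrix_mul_conjTranspose (v : Fin 3 → R) :
    (crossMatrix v * (crossMatrix v)ᴴ).charpoly = (X - C (v ⬝ᵥ star v)) ^ 2 * X := by
  rw [crossMatrix_mul_conjTranspose, charpoly_scalar_sub_vecMulVec, dotProduct_comm (star v) v,
    sub_self, C_0, sub_zero, Fintype.card_fin]

end CrossMatrix

theorem sum_norm_sq_crossMatrix {R : Type*} [NormedCommRing R] (v : Fin 3 → R) :
    ∑ i, ∑ k, ‖crossMatrix v i k‖ ^ 2 = 2 * ∑ i, ‖v i‖ ^ 2 := by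
  simp only [crossMatrix, of_apply, cons_val', cons_val_fin_one, Fin.sum_univ_three, cons_val_zero,
    cons_val_one, cons_val, norm_zero, ne_eq, OfNat.ofNat_ne_zero, not_false_eq_true, zero_pow,
    norm_neg, zero_add, add_zero]
  ring

section Eigenvalues

variable {𝕜 : Type*} [RCLike 𝕜]

theorem dotProduct_star_self_eq_sum_norm_sq {n : Type*} [Fintype n] (v : n → 𝕜) :
    v ⬝ᵥ star v = ((∑ i, ‖v i‖ ^ 2 : ℝ) : 𝕜) := by
  simp [dotProduct, RCLike.mul_conj]

open Polynomial in
theorem map_eigenvalues_eq_of_charpoly_eq_prod {n : Type*} [Fintype n] [DecidableEq n]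
    {A : Matrix n n 𝕜} (hA : A.IsHermitian) {s : Multiset ℝ}
    (hs : A.charpoly = (s.map fun r : ℝ => X - C (r : 𝕜)).prod) :
    Finset.univ.val.map hA.eigenvalues = s := by
  have hprod : A.charpoly = ((s.map RCLike.ofReal).map fun r => X - C r).prod := by
    rw [hs, Multiset.map_map, Function.comp_def]
  apply Multiset.map_injective (RCLike.ofReal_injective (K := 𝕜))
  rw [Multiset.map_map, ← hA.roots_charpoly_eq_eigenvalues, hprod, roots_multiset_prod_X_sub_C]

theorem map_eigenvalues_mul_conjTranspose_of_transpose_eq_neg {M : Matrix (Fin 3) (Fin 3) 𝕜}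
    (hM : Mᵀ = -M) (h : (M * Mᴴ).IsHermitian) :
    Finset.univ.val.map h.eigenvalues =
      {(∑ i, ∑ k, ‖M i k‖ ^ 2) / 2, (∑ i, ∑ k, ‖M i k‖ ^ 2) / 2, 0} := by
  obtain ⟨v, rfl⟩ := exists_crossMatrix_eq_of_transpose_eq_neg hM
  apply map_eigenvalues_eq_of_charpoly_eq_prod
  rw [charpoly_crossMatrix_mul_conjTranspose, dotProduct_star_self_eq_sum_norm_sq,
    sum_norm_sq_crossMatrix, mul_div_cancel_left₀ _ two_ne_zero]
  simp only [Multiset.insert_eq_cons, Multiset.map_cons, Multiset.prod_cons,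
    Multiset.map_singleton, Multiset.prod_singleton, RCLike.ofReal_zero, Polynomial.C_0, sub_zero]
  ring

end Eigenvalues

theorem vnEntropy_eq_neg_sum_map_eigenvalues {n : Type*} [Fintype n] [DecidableEq n]
    {ρ : Matrix n n ℂ} (h : ρ.IsHermitian) :
    vnEntropy ρ =
      -((Finset.univ.val.map h.eigenvalues).map fun x => x * Real.logb 2 x).sum := by
  rw [vnEntropy, dif_pos h, Multiset.map_map]
  rfl

theorem antisymmetric_is_singlet_general (M : Matrix (Fin 3) (Fin 3) ℂ) (hanti : Mᵀ = -M)
    (h : (M * Mᴴ).IsHermitian) :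
    Finset.univ.val.map h.eigenvalues =
        {(∑ i, ∑ k, ‖M i k‖ ^ 2) / 2, (∑ i, ∑ k, ‖M i k‖ ^ 2) / 2, 0} ∧
      vnEntropy (M * Mᴴ) =
        -((∑ i, ∑ k, ‖M i k‖ ^ 2) * Real.logb 2 ((∑ i, ∑ k, ‖M i k‖ ^ 2) / 2)) := by
  have heig := map_eigenvalues_mul_conjTranspose_of_transpose_eq_neg hanti h
  refine ⟨heig, ?_⟩
  rw [vnEntropy_eq_neg_sum_map_eigenvalues h, heig]
  simp only [Multiset.insert_eq_cons, Multiset.map_cons, Multiset.sum_cons,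
    Multiset.map_singleton, Multiset.sum_singleton, zero_mul, add_zero]
  ring

/-- every state in the antisymmetric subspace of ℂ³⊗ℂ³ is a singlet:
its reduced state `M Mᴴ` has eigenvalues `{1/2, 1/2, 0}` and entanglement entropy 1. -/
theorem antisymmetric_is_singlet (M : Matrix (Fin 3) (Fin 3) ℂ)
    (hanti : Mᵀ = -M) (hnorm : ∑ i, ∑ k, ‖M i k‖ ^ 2 = 1)
    (h : (M * Mᴴ).IsHermitian) :
    Finset.univ.val.map h.eigenvalues = ({1/2, 1/2, 0} : Multiset ℝ) ∧
      vnEntropy (M * Mᴴ) = 1 := by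
  have hlog : Real.logb 2 (1 / 2) = -1 := by
    rw [one_div, Real.logb_inv, Real.logb_self_eq_one one_lt_two]
  simpa only [hnorm, hlog, one_mul, neg_neg] using antisymmetric_is_singlet_general M hanti h
end
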